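/- arXiv:1805.09518 — 10 statements merged into one kernel-verified Lean document; each statement's English description precedes it below -/
import Mathlib

section
/- The ordered Ramsey number of the ordered graph K₂ ∪ K₂ with ordering A (vertex set {1,2,3,4}, edge set {{1,2},{3,4}}) equals 6. That is, 6 is the least N such that every 2-coloring of the edges of the complete graph on {1,...,N} contains a monochromatic ordered copy of this graph. -/
/-- A 2-coloring `c` of the edges of the complete graph on the ordered vertex set
`{1,…,N}` contains an ordered copy, in color `b`, of the ordered graph with vertex
set `{1,…,n}` and edge set `E` (edges listed as pairs `(i, j)` with `i < j`):
there is a strictly increasing map `φ : {1,…,n} → {1,…,N}` such that every edge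
`(i, j) ∈ E` has `(φ i, φ j)` colored `b`. -/
def ContainsOrderedCopy (n N : ℕ) (E : Finset (ℕ × ℕ)) (c : ℕ → ℕ → Bool) (b : Bool) :
    Prop :=
  ∃ φ : ℕ → ℕ,
    (∀ i, 1 ≤ i → i ≤ n → 1 ≤ φ i ∧ φ i ≤ N) ∧
    (∀ i j, 1 ≤ i → i < j → j ≤ n → φ i < φ j) ∧
    (∀ e ∈ E, c (φ e.1) (φ e.2) = b)

/-- A 2-coloring `c` of the edges of the complete graph on `{1,…,N}` contains a
monochromatic ordered copy of the ordered graph with vertex set `{1,…,n}` and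
edge set `E`. -/
def ContainsMonoOrderedCopy (n N : ℕ) (E : Finset (ℕ × ℕ)) (c : ℕ → ℕ → Bool) : Prop :=
  ∃ b : Bool, ContainsOrderedCopy n N E c b

/-!
Call the two colors red (`false`) and blue (`true`), and look for a red matching with `k` edges or a
blue one with `l` edges. Among the `k + l - 1` disjoint pairs `(1, 2), (3, 4), …`, either `k` are
red or `l` are blue. Conversely, on fewer than
`2 * (k + l - 1)` vertices, color a pair red exactly when its larger end lies in
`{1, …, 2 * k - 1}`: a red copy of the matching with `k` edges would have all its `2 * k` vertices
there, and a blue copy of the one with `l` edges would have all its vertices but the first among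
the remaining ones, of which there are at most `2 * l - 2`.
-/

/-- The ordered matching on `{1, …, 2k}` with edges `(1, 2), (3, 4), …, (2k - 1, 2k)`, so that every
edge lies entirely to the left of the next one. The edges are indexed from `i = 0`. -/
def consecutiveMatching (k : ℕ) : Finset (ℕ × ℕ) :=
  (Finset.range k).image fun i => (2 * i + 1, 2 * i + 2)

theorem forall_mem_consecutiveMatching {k : ℕ} {p : ℕ × ℕ → Prop} :
    (∀ e ∈ consecutiveMatching k, p e) ↔ ∀ i < k, p (2 * i + 1, 2 * i + 2) := by
  simp [consecutiveMatching]

section UpperBound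

variable {k N : ℕ} {c : ℕ → ℕ → Bool} {b : Bool}

theorem containsOrderedCopy_consecutiveMatching_of_strictMonoOn {f : ℕ → ℕ}
    (hf : StrictMonoOn f (Set.Iio k)) (hN : ∀ i < k, 2 * f i + 2 ≤ N)
    (hc : ∀ i < k, c (2 * f i + 1) (2 * f i + 2) = b) :
    ContainsOrderedCopy (2 * k) N (consecutiveMatching k) c b := by
  -- The `r`-th vertex of the `i`-th pair goes to the `r`-th vertex of the `f i`-th pair.
  refine ⟨fun v => 2 * f ((v - 1) / 2) + (v - 1) % 2 + 1, fun v hv hvk => ?_,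
    fun v w hv hvw hwk => ?_, forall_mem_consecutiveMatching.2 fun i hi => ?_⟩
  · have := hN ((v - 1) / 2) (by omega)
    dsimp only
    omega
  · obtain heq | hlt : (v - 1) / 2 = (w - 1) / 2 ∨ (v - 1) / 2 < (w - 1) / 2 := by omega
    · simp only [heq]
      omega
    · have : f ((v - 1) / 2) < f ((w - 1) / 2) :=
        hf (Set.mem_Iio.2 (by omega)) (Set.mem_Iio.2 (by omega)) hlt
      dsimp only
      omega
  · have hdiv : (2 * i + 1) / 2 = i := by omega
    simpa [hdiv, Nat.add_mod] using hc i hi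

theorem containsOrderedCopy_consecutiveMatching_of_le_card {s : Finset ℕ} (hk : k ≤ s.card)
    (hN : ∀ i ∈ s, 2 * i + 2 ≤ N) (hc : ∀ i ∈ s, c (2 * i + 1) (2 * i + 2) = b) :
    ContainsOrderedCopy (2 * k) N (consecutiveMatching k) c b := by
  have lt_card (hs : (Set.ofPred (· ∈ s)).Finite) {i : ℕ} (hi : i < k) :
      i < hs.toFinset.card := by
    have toFinset_eq : hs.toFinset = s := by ext; simp
    rw [toFinset_eq]
    exact hi.trans_le hk
  have nth_mem (i : ℕ) (hi : i < k) : Nat.nth (· ∈ s) i ∈ s :=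
    Nat.nth_mem i fun hs => lt_card hs hi
  exact containsOrderedCopy_consecutiveMatching_of_strictMonoOn
    (fun _ _ _ hj hij => Nat.nth_lt_nth' hij fun hs => lt_card hs hj)
    (fun i hi => hN _ (nth_mem i hi)) (fun i hi => hc _ (nth_mem i hi))

theorem containsOrderedCopy_consecutiveMatching_false_or_true (c : ℕ → ℕ → Bool) (k l : ℕ) :
    ContainsOrderedCopy (2 * k) (2 * (k + l - 1)) (consecutiveMatching k) c false ∨
      ContainsOrderedCopy (2 * l) (2 * (k + l - 1)) (consecutiveMatching l) c true := by
  let pairs (b : Bool) : Finset ℕ :=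
    {i ∈ Finset.range (k + l - 1) | c (2 * i + 1) (2 * i + 2) = b}
  have card_pairs : (pairs false).card + (pairs true).card = k + l - 1 := by
    simpa [pairs] using Finset.card_filter_add_card_filter_not (s := Finset.range (k + l - 1))
      (fun i => c (2 * i + 1) (2 * i + 2) = false)
  have copy {b : Bool} {n : ℕ} (hn : n ≤ (pairs b).card) :
      ContainsOrderedCopy (2 * n) (2 * (k + l - 1)) (consecutiveMatching n) c b := by
    refine containsOrderedCopy_consecutiveMatching_of_le_card hn (fun i hi => ?_) fun i hi =>
      (Finset.mem_filter.1 hi).2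
    have := Finset.mem_range.1 (Finset.mem_filter.1 hi).1
    omega
  obtain hk | hl : k ≤ (pairs false).card ∨ l ≤ (pairs true).card := by omega
  · exact .inl (copy hk)
  · exact .inr (copy hl)

end UpperBound

section LowerBound

theorem add_sub_le_of_strictMonoOn_Icc {φ : ℕ → ℕ} {a b : ℕ} (hφ : StrictMonoOn φ (Set.Icc a b))
    (hab : a ≤ b) : φ a + (b - a) ≤ φ b := by
  have maps : ∀ i ∈ Finset.Icc a b, φ i ∈ Finset.Icc (φ a) (φ b) := by
    simpa [Set.MapsTo] using hφ.monotoneOn.mapsTo_Icc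
  have card_le := Finset.card_le_card_of_injOn φ maps (by simpa using hφ.injOn)
  simp only [Nat.card_Icc] at card_le
  omega

/-- The coloring in which a pair is `false` exactly when its larger end is at most `t`; it is
extremal for consecutive matchings. -/
def thresholdColoring (t : ℕ) : ℕ → ℕ → Bool := fun _ j => decide (t < j)

variable {k N t : ℕ}

theorem le_of_containsOrderedCopy_thresholdColoring_false
    (h : ContainsOrderedCopy (2 * k) N (consecutiveMatching k) (thresholdColoring t) false) :
    2 * k ≤ t := by
  obtain ⟨φ, hφN, hφ, hc⟩ := h
  obtain _ | k := k
  · exact Nat.zero_le t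
  have last_le : φ (2 * k + 2) ≤ t := by
    simpa [thresholdColoring] using forall_mem_consecutiveMatching.1 hc k (by omega)
  have first_pos : 1 ≤ φ 1 := (hφN 1 le_rfl (by omega)).1
  have spread : φ 1 + (2 * k + 2 - 1) ≤ φ (2 * k + 2) :=
    add_sub_le_of_strictMonoOn_Icc (fun i hi j hj hij => hφ i j hi.1 hij hj.2) (by omega)
  omega

theorem le_of_containsOrderedCopy_thresholdColoring_true (hk : 0 < k)
    (h : ContainsOrderedCopy (2 * k) N (consecutiveMatching k) (thresholdColoring t) true) :
    t + 2 * k ≤ N + 1 := by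
  obtain ⟨φ, hφN, hφ, hc⟩ := h
  have lt_second : t < φ 2 := by
    simpa [thresholdColoring] using forall_mem_consecutiveMatching.1 hc 0 hk
  have last_le : φ (2 * k) ≤ N := (hφN (2 * k) (by omega) le_rfl).2
  have spread : φ 2 + (2 * k - 2) ≤ φ (2 * k) :=
    add_sub_le_of_strictMonoOn_Icc
      (fun i hi j hj hij => hφ i j (one_le_two.trans hi.1) hij hj.2) (by omega)
  omega

end LowerBound

theorem orderedRamsey_K2uK2_A_general {k l : ℕ} (hk : 0 < k) (hl : 0 < l) :
    IsLeast {N : ℕ | ∀ c : ℕ → ℕ → Bool,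
      ContainsOrderedCopy (2 * k) N (consecutiveMatching k) c false ∨
        ContainsOrderedCopy (2 * l) N (consecutiveMatching l) c true} (2 * (k + l - 1)) := by
  refine ⟨fun c => containsOrderedCopy_consecutiveMatching_false_or_true c k l, fun N hN => ?_⟩
  obtain hfalse | htrue := hN (thresholdColoring (2 * k - 1))
  · have := le_of_containsOrderedCopy_thresholdColoring_false hfalse
    omega
  · have := le_of_containsOrderedCopy_thresholdColoring_true hl htrue
    omega

/-- The ordered Ramsey number of `K₂ ∪ K₂` with ordering `A`
(edge set `{(1, 2), (3, 4)}`) equals `6`. -/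
theorem orderedRamsey_K2uK2_A :
    IsLeast {N : ℕ | ∀ c : ℕ → ℕ → Bool,
      ContainsMonoOrderedCopy 4 N {(1, 2), (3, 4)} c} 6 := by
  have matching_two : consecutiveMatching 2 = {(1, 2), (3, 4)} := rfl
  simpa [ContainsMonoOrderedCopy, matching_two] using
    orderedRamsey_K2uK2_A_general two_pos two_pos
end

section
/- The ordered Ramsey number of the ordered graph K₂ ∪ K₂ with ordering B (vertex set {1,2,3,4}, edge set {{1,3},{2,4}}) equals 5. -/
/-!
On five points, each of the edges `13`, `24`, `35`, `14`, `25` crosses the next one, and the last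
crosses the first. An odd cycle is not 2-colorable, so some crossing pair is monochromatic.
Four points span only the crossing pair `13`, `24`, whose edges can be given different colors.
-/

theorem exists_apply_eq_apply_add_one_of_odd {n : ℕ} [NeZero n] (hn : Odd n) (f : Fin n → Bool) :
    ∃ i, f i = f (i + 1) := by
  by_contra! hf
  obtain _ | _ | m := n
  · exact NeZero.ne 0 rfl
  · exact hf 0 (congrArg f (Subsingleton.elim (α := Fin 1) _ _))
  let C : (SimpleGraph.cycleGraph (m + 2)).Coloring Bool :=
    SimpleGraph.Coloring.mk f fun {u v} huv => by
      rcases SimpleGraph.cycleGraph_adj.mp huv with h | h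
      · rw [sub_eq_iff_eq_add'.mp h]
        exact (hf v).symm
      · rw [sub_eq_iff_eq_add'.mp h]
        exact hf u
  have two_colors : (SimpleGraph.cycleGraph (m + 2)).chromaticNumber ≤ 2 :=
    C.colorable.chromaticNumber_le
  rw [SimpleGraph.chromaticNumber_cycleGraph_of_odd _ (by lia) hn] at two_colors
  exact absurd two_colors (by decide)

theorem exists_crossing_eq_fin_five (χ : Fin 5 → Fin 5 → Bool) :
    ∃ p q r s, p < q ∧ q < r ∧ r < s ∧ χ p r = χ q s := by
  obtain ⟨i, hi⟩ := exists_apply_eq_apply_add_one_of_odd (by decide : Odd 5)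
    ![χ 0 2, χ 1 3, χ 2 4, χ 0 3, χ 1 4]
  fin_cases i
  · exact ⟨0, 1, 2, 3, by decide, by decide, by decide, hi⟩
  · exact ⟨1, 2, 3, 4, by decide, by decide, by decide, hi⟩
  · exact ⟨0, 2, 3, 4, by decide, by decide, by decide, hi.symm⟩
  · exact ⟨0, 1, 3, 4, by decide, by decide, by decide, hi⟩
  · exact ⟨0, 1, 2, 4, by decide, by decide, by decide, hi.symm⟩

theorem containsMonoOrderedCopy_crossing_iff {N : ℕ} {c : ℕ → ℕ → Bool} :
    ContainsMonoOrderedCopy 4 N {(1, 3), (2, 4)} c ↔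
      ∃ p q r s, 1 ≤ p ∧ p < q ∧ q < r ∧ r < s ∧ s ≤ N ∧ c p r = c q s := by
  constructor
  · rintro ⟨b, φ, range, strictMono, color⟩
    refine ⟨φ 1, φ 2, φ 3, φ 4, (range 1 ?_ ?_).1, strictMono 1 2 ?_ ?_ ?_,
      strictMono 2 3 ?_ ?_ ?_, strictMono 3 4 ?_ ?_ ?_, (range 4 ?_ ?_).2,
      (color (1, 3) ?_).trans (color (2, 4) ?_).symm⟩ <;> simp
  · rintro ⟨p, q, r, s, hp, hpq, hqr, hrs, hs, color⟩
    refine ⟨c p r, fun | 1 => p | 2 => q | 3 => r | _ => s, ?_, ?_, ?_⟩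
    · intro i _ _
      interval_cases i <;> dsimp only <;> lia
    · intro i j _ _ _
      interval_cases j <;> interval_cases i <;> dsimp only <;> lia
    · simp [color]

theorem containsMonoOrderedCopy_crossing_of_five_le {N : ℕ} (hN : 5 ≤ N) (c : ℕ → ℕ → Bool) :
    ContainsMonoOrderedCopy 4 N {(1, 3), (2, 4)} c := by
  obtain ⟨p, q, r, s, hpq, hqr, hrs, color⟩ :=
    exists_crossing_eq_fin_five fun i j => c (i + 1) (j + 1)
  exact containsMonoOrderedCopy_crossing_iff.mpr
    ⟨p + 1, q + 1, r + 1, s + 1, by lia, by lia, by lia, by lia, by lia, color⟩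

theorem exists_not_containsMonoOrderedCopy_crossing {N : ℕ} (hN : N < 5) :
    ∃ c, ¬ContainsMonoOrderedCopy 4 N {(1, 3), (2, 4)} c := by
  refine ⟨fun i _ => decide (i = 1), fun h => ?_⟩
  obtain ⟨p, q, r, s, hp, hpq, hqr, hrs, hs, color⟩ :=
    containsMonoOrderedCopy_crossing_iff.mp h
  have p_eq : p = 1 := by lia
  have q_ne : q ≠ 1 := by lia
  simp [p_eq, q_ne] at color

/-- The ordered Ramsey number of `K₂ ∪ K₂` with ordering `B`
(edge set `{(1, 3), (2, 4)}`) equals `5`. -/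
theorem orderedRamsey_K2uK2_B :
    IsLeast {N : ℕ | ∀ c : ℕ → ℕ → Bool,
      ContainsMonoOrderedCopy 4 N {(1, 3), (2, 4)} c} 5 := by
  refine ⟨containsMonoOrderedCopy_crossing_of_five_le le_rfl, fun N hN => ?_⟩
  by_contra! N_lt
  obtain ⟨c, hc⟩ := exists_not_containsMonoOrderedCopy_crossing N_lt
  exact hc (hN c)
end

section
/- The ordered Ramsey number of the ordered graph K₂ ∪ K₂ with ordering C (vertex set {1,2,3,4}, edge set {{1,4},{2,3}}) equals 6. -/
/-!
The matching `(1, 4), (2, 3)` is the case `k = 1` of the nested matching with `k + 1` edges, whose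
ordered Ramsey number is `4k + 2`.

Among `4k + 2` vertices there are `2k + 1` pairwise nested edges `(i, 4k + 3 - i)`; by pigeonhole
`k + 1` of them have the same color, and any `k + 1` of them form a nested matching.

Among `4k + 1` vertices, color an edge according to whether it meets the `k` first or `k` last
vertices. The innermost edge of a nested matching with `k + 1` edges avoids these vertices, since
it has `k` vertices of the matching on either side. The outermost edge meets them, since the
matching has `2k + 2` vertices and only `2k + 1` vertices are left in the middle.
-/

open Finset

/-- The nested perfect matching on `{1,…,2m}`: its edges are `(i, 2m + 1 - i)` for `1 ≤ i ≤ m`,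
listed from the outermost to the innermost. -/
def nestedMatching (m : ℕ) : Finset (ℕ × ℕ) :=
  (Icc 1 m).image fun i => (i, 2 * m + 1 - i)

/-- The extremal coloring of the complete graph on `{1,…,4k+1}`: an edge is `true` when it meets
one of the two margins `{1,…,k}` and `{3k+2,…,4k+1}`, and `false` when it lies in the middle block
of `2k + 1` vertices. Edges are pairs `(x, y)` with `x < y`, so only the outward end is tested. -/
def marginColoring (k x y : ℕ) : Bool :=
  decide (x ≤ k ∨ 3 * k + 2 ≤ y)

theorem mem_nestedMatching {m i : ℕ} (hi : i ∈ Set.Icc 1 m) :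
    (i, 2 * m + 1 - i) ∈ nestedMatching m :=
  mem_image_of_mem _ (Finset.mem_Icc.2 hi)

theorem add_sub_le_of_strictMonoOn {φ : ℕ → ℕ} {i j : ℕ} (hij : i ≤ j)
    (hφ : StrictMonoOn φ (Set.Icc i j)) : φ i + (j - i) ≤ φ j := by
  induction j, hij using Nat.le_induction with
  | base => simp
  | succ j hij ih =>
    have hprev : φ i + (j - i) ≤ φ j := ih (hφ.mono (Set.Icc_subset_Icc_right j.le_succ))
    have hstep : φ j < φ (j + 1) := hφ ⟨hij, j.le_succ⟩ ⟨by lia, le_rfl⟩ j.lt_succ_self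
    lia

theorem exists_strictMonoOn_forall_mem (T : Finset ℕ) :
    ∃ a : ℕ → ℕ, StrictMonoOn a (Set.Icc 1 #T) ∧ ∀ i ∈ Set.Icc 1 #T, a i ∈ T := by
  have hT : {x | x ∈ T}.Finite := T.finite_toSet
  have hcard : #hT.toFinset = #T := by simp
  refine ⟨fun i => Nat.nth (· ∈ T) (i - 1), fun i hi j hj hij => ?_, fun i hi => ?_⟩
  · obtain ⟨hi₁, -⟩ := hi
    obtain ⟨hj₁, hj₂⟩ := hj
    exact Nat.nth_strictMonoOn hT (Set.mem_Iio.2 (by lia)) (Set.mem_Iio.2 (by lia)) (by lia)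
  · obtain ⟨hi₁, hi₂⟩ := hi
    exact Nat.nth_mem_of_lt_card hT (by lia)

/-- The extension to `{1,…,2m}` of a map `a : {1,…,m} → {1,…,M}` that commutes with the reflections
`i ↦ 2m + 1 - i` and `x ↦ 2M + 1 - x`. It sends the edge `(i, 2m + 1 - i)` of `nestedMatching m` to
the edge of `nestedMatching M` with left end `a i`. -/
def reflectExtend (m M : ℕ) (a : ℕ → ℕ) (i : ℕ) : ℕ :=
  if i ≤ m then a i else 2 * M + 1 - a (2 * m + 1 - i)

section reflectExtend

variable {m M : ℕ} {a : ℕ → ℕ}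

theorem reflectExtend_of_le {i : ℕ} (hi : i ≤ m) : reflectExtend m M a i = a i :=
  if_pos hi

theorem reflectExtend_of_lt {i : ℕ} (hi : m < i) :
    reflectExtend m M a i = 2 * M + 1 - a (2 * m + 1 - i) :=
  if_neg hi.not_ge

theorem mapsTo_reflectExtend (haM : Set.MapsTo a (Set.Icc 1 m) (Set.Icc 1 M)) :
    Set.MapsTo (reflectExtend m M a) (Set.Icc 1 (2 * m)) (Set.Icc 1 (2 * M)) := by
  rintro i ⟨hi₁, hi₂⟩
  rcases le_or_gt i m with him | him
  · obtain ⟨ha₁, ha₂⟩ := haM ⟨hi₁, him⟩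
    rw [reflectExtend_of_le him]
    exact ⟨ha₁, by lia⟩
  · obtain ⟨ha₁, ha₂⟩ := haM (x := 2 * m + 1 - i) ⟨by lia, by lia⟩
    rw [reflectExtend_of_lt him]
    exact ⟨by lia, by lia⟩

theorem strictMonoOn_reflectExtend (ha : StrictMonoOn a (Set.Icc 1 m))
    (haM : Set.MapsTo a (Set.Icc 1 m) (Set.Icc 1 M)) :
    StrictMonoOn (reflectExtend m M a) (Set.Icc 1 (2 * m)) := by
  rintro i ⟨hi₁, hi₂⟩ j ⟨hj₁, hj₂⟩ hij
  rcases le_or_gt j m with hjm | hjm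
  · rw [reflectExtend_of_le (hij.le.trans hjm), reflectExtend_of_le hjm]
    exact ha ⟨hi₁, hij.le.trans hjm⟩ ⟨hj₁, hjm⟩ hij
  have haj : a (2 * m + 1 - j) ≤ M := (haM ⟨by lia, by lia⟩).2
  rcases le_or_gt i m with him | him
  · have hai : a i ≤ M := (haM ⟨hi₁, him⟩).2
    rw [reflectExtend_of_le him, reflectExtend_of_lt hjm]
    lia
  · have hlt : a (2 * m + 1 - j) < a (2 * m + 1 - i) :=
      ha ⟨by lia, by lia⟩ ⟨by lia, by lia⟩ (by lia)
    rw [reflectExtend_of_lt him, reflectExtend_of_lt hjm]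
    lia

theorem containsOrderedCopy_nestedMatching_of_strictMonoOn {c : ℕ → ℕ → Bool} {b : Bool}
    (ha : StrictMonoOn a (Set.Icc 1 m)) (haM : Set.MapsTo a (Set.Icc 1 m) (Set.Icc 1 M))
    (hc : ∀ i ∈ Set.Icc 1 m, c (a i) (2 * M + 1 - a i) = b) :
    ContainsOrderedCopy (2 * m) (2 * M) (nestedMatching m) c b := by
  refine ⟨reflectExtend m M a, fun i hi him => mapsTo_reflectExtend haM ⟨hi, him⟩,
    fun i j hi hij hj => strictMonoOn_reflectExtend ha haM ⟨hi, hij.le.trans hj⟩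
      ⟨hi.trans hij.le, hj⟩ hij, fun e he => ?_⟩
  obtain ⟨i, hi, rfl⟩ := mem_image.1 he
  obtain ⟨hi₁, him⟩ := Finset.mem_Icc.1 hi
  have hreflect : 2 * m + 1 - (2 * m + 1 - i) = i := by lia
  rw [reflectExtend_of_le him, reflectExtend_of_lt (by lia), hreflect]
  exact hc i ⟨hi₁, him⟩

end reflectExtend

theorem containsOrderedCopy_nestedMatching_of_subset {m M : ℕ} {c : ℕ → ℕ → Bool} {b : Bool}
    {T : Finset ℕ} (hm : m ≤ #T) (hTM : T ⊆ Icc 1 M) (hc : ∀ i ∈ T, c i (2 * M + 1 - i) = b) :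
    ContainsOrderedCopy (2 * m) (2 * M) (nestedMatching m) c b := by
  obtain ⟨a, ha, haT⟩ := exists_strictMonoOn_forall_mem T
  have hsub : Set.Icc 1 m ⊆ Set.Icc 1 #T := Set.Icc_subset_Icc_right hm
  exact containsOrderedCopy_nestedMatching_of_strictMonoOn (ha.mono hsub)
    (fun i hi => Finset.mem_Icc.1 (hTM (haT i (hsub hi)))) fun i hi => hc _ (haT i (hsub hi))

theorem containsMonoOrderedCopy_nestedMatching (k : ℕ) (c : ℕ → ℕ → Bool) :
    ContainsMonoOrderedCopy (2 * (k + 1)) (4 * k + 2) (nestedMatching (k + 1)) c := by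
  let color (i : ℕ) : Bool := c i (2 * (2 * k + 1) + 1 - i)
  obtain ⟨b, -, hb⟩ : ∃ b ∈ (univ : Finset Bool), k < #{i ∈ Icc 1 (2 * k + 1) | color i = b} :=
    exists_lt_card_fiber_of_mul_lt_card_of_maps_to (fun _ _ => mem_univ _) (by simp)
  have hN : 4 * k + 2 = 2 * (2 * k + 1) := by ring
  rw [hN]
  exact ⟨b, containsOrderedCopy_nestedMatching_of_subset hb (filter_subset _ _)
    fun i hi => (mem_filter.1 hi).2⟩

theorem not_containsMonoOrderedCopy_marginColoring {k N : ℕ} (hN : N ≤ 4 * k + 1) :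
    ¬ ContainsMonoOrderedCopy (2 * (k + 1)) N (nestedMatching (k + 1)) (marginColoring k) := by
  rintro ⟨b, φ, hrange, hmono, hcolor⟩
  have hgap {i j : ℕ} (hi : 1 ≤ i) (hij : i ≤ j) (hj : j ≤ 2 * k + 2) : φ i + (j - i) ≤ φ j :=
    add_sub_le_of_strictMonoOn hij fun x hx y hy hxy =>
      hmono x y (hi.trans hx.1) hxy (hy.2.trans hj)
  have hfirst : 1 ≤ φ 1 := (hrange 1 le_rfl (by lia)).1
  have hlast : φ (2 * k + 2) ≤ N := (hrange (2 * k + 2) (by lia) le_rfl).2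
  have houter : marginColoring k (φ 1) (φ (2 * k + 2)) = true := by
    have hspan := hgap (i := 1) (j := 2 * k + 2) le_rfl (by lia) le_rfl
    exact decide_eq_true (by lia)
  have hinner : marginColoring k (φ (k + 1)) (φ (k + 2)) = false := by
    have hleft := hgap (i := 1) (j := k + 1) le_rfl (by lia) (by lia)
    have hright := hgap (i := k + 2) (j := 2 * k + 2) (by lia) (by lia) le_rfl
    exact decide_eq_false (by lia)
  have houter_mem : (1, 2 * k + 2) ∈ nestedMatching (k + 1) :=
    mem_nestedMatching ⟨le_rfl, by lia⟩
  have hinner_mem : (k + 1, k + 2) ∈ nestedMatching (k + 1) := by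
    convert mem_nestedMatching (m := k + 1) (i := k + 1) ⟨by lia, le_rfl⟩ using 2
    lia
  have htrue : b = true := (hcolor _ houter_mem).symm.trans houter
  have hfalse : b = false := (hcolor _ hinner_mem).symm.trans hinner
  exact Bool.noConfusion (htrue.symm.trans hfalse)

theorem orderedRamsey_K2uK2_C_general (k : ℕ) :
    IsLeast {N : ℕ | ∀ c : ℕ → ℕ → Bool,
      ContainsMonoOrderedCopy (2 * (k + 1)) N (nestedMatching (k + 1)) c} (4 * k + 2) := by
  refine ⟨containsMonoOrderedCopy_nestedMatching k, fun N hN => ?_⟩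
  by_contra! hlt
  exact not_containsMonoOrderedCopy_marginColoring (by lia) (hN (marginColoring k))

/-- The ordered Ramsey number of `K₂ ∪ K₂` with ordering `C`
(edge set `{(1, 4), (2, 3)}`) equals `6`. -/
theorem orderedRamsey_K2uK2_C :
    IsLeast {N : ℕ | ∀ c : ℕ → ℕ → Bool,
      ContainsMonoOrderedCopy 4 N {(1, 4), (2, 3)} c} 6 := by
  have hC : nestedMatching 2 = {(1, 4), (2, 3)} := rfl
  simpa only [hC] using orderedRamsey_K2uK2_C_general 1
end

section
/- The ordered Ramsey number of the ordered diamond graph K₄ − e with ordering A (vertex set {1,2,3,4}, all edges of K₄ except {1,4}) is at most 17: every 2-coloring of the edges of the complete graph on {1,...,17} contains a monochromatic ordered copy of this graph. -/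
/-!
Give the edge `{1, N}` both colors at once. Then some color `b` occurs on at least `M` edges at
vertex `1` as soon as `2 * M ≤ N + 1`. If moreover `R(n, n + 1) ≤ M`, the other ends of these edges
contain a clique of order `n` in color `b` or one of order `n + 1` in the other color; in the first
case, vertex `1` extends it to order `n + 1`. Either way only the edge `{1, N}` can have the wrong
color, and it can only join the first vertex of the clique to the last one. The theorem is the case
`n = 3`, `R(3, 4) ≤ 9`.
-/

open Finset SimpleGraph

section Ramsey

variable {V : Type*} {N k l m n : ℕ}

theorem degree_add_degree_compl_add_one [Fintype V] (G : SimpleGraph V) (v : V)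
    [Fintype (G.neighborSet v)] [Fintype (Gᶜ.neighborSet v)] :
    G.degree v + Gᶜ.degree v + 1 = Fintype.card V := by
  classical
  have hlt : G.degree v < Fintype.card V := by
    convert G.degree_lt_card_verts v
  rw [G.degree_compl]
  omega

/-- The Ramsey arrow `N → (k, l)`, i.e. `R(k, l) ≤ N`. The two color classes are encoded as a graph
and its complement. -/
def RamseyArrow (N k l : ℕ) : Prop :=
  ∀ G : SimpleGraph (Fin N), (∃ s, G.IsNClique k s) ∨ ∃ s, Gᶜ.IsNClique l s

namespace RamseyArrow

theorem symm (h : RamseyArrow N k l) : RamseyArrow N l k := fun G ↦ by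
  simpa only [compl_compl] using (h Gᶜ).symm

theorem exists_isNClique_subset (h : RamseyArrow N k l) (G : SimpleGraph V) {S : Finset V}
    (hS : N ≤ #S) : (∃ s ⊆ S, G.IsNClique k s) ∨ ∃ s ⊆ S, Gᶜ.IsNClique l s := by
  obtain ⟨T, hTS, hT⟩ := exists_subset_card_eq hS
  let f : Fin N ↪ V := (T.equivFinOfCardEq hT).symm.toEmbedding.trans (.subtype _)
  have map_subset (s : Finset (Fin N)) : s.map f ⊆ S := by
    simp only [subset_iff, mem_map]
    rintro _ ⟨i, -, rfl⟩
    exact hTS ((T.equivFinOfCardEq hT).symm i).2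
  have map_compl_comap_le : (G.comap f)ᶜ.map f ≤ Gᶜ := by
    rw [map_le_iff_le_comap]
    exact fun _ _ h ↦ ⟨f.injective.ne h.1, h.2⟩
  refine (h (G.comap f)).imp ?_ ?_
  · exact fun ⟨s, hs⟩ ↦ ⟨s.map f, map_subset s, hs.map.mono (map_comap_le f G)⟩
  · exact fun ⟨s, hs⟩ ↦ ⟨s.map f, map_subset s, hs.map.mono map_compl_comap_le⟩

theorem exists_isNClique_succ_of_le_degree (h : RamseyArrow m k l) {G : SimpleGraph V} {v : V}
    [Fintype (G.neighborSet v)] (hv : m ≤ G.degree v) :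
    (∃ s, G.IsNClique (k + 1) s) ∨ ∃ s, Gᶜ.IsNClique l s := by
  classical
  refine (h.exists_isNClique_subset G hv).imp ?_ ?_
  · exact fun ⟨s, hsv, hs⟩ ↦ ⟨insert v s, hs.insert fun u hu ↦ by simpa using hsv hu⟩
  · exact fun ⟨s, _, hs⟩ ↦ ⟨s, hs⟩

theorem exists_isNClique_of_le_degree_or (hm : RamseyArrow m k (l + 1))
    (hn : RamseyArrow n (k + 1) l) {G : SimpleGraph V} {v : V} [Fintype (G.neighborSet v)]
    [Fintype (Gᶜ.neighborSet v)] (hv : m ≤ G.degree v ∨ n ≤ Gᶜ.degree v) :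
    (∃ s, G.IsNClique (k + 1) s) ∨ ∃ s, Gᶜ.IsNClique (l + 1) s := by
  obtain hv | hv := hv
  · exact hm.exists_isNClique_succ_of_le_degree hv
  · simpa only [compl_compl] using (hn.symm.exists_isNClique_succ_of_le_degree hv).symm

theorem two_left (l : ℕ) : RamseyArrow l 2 l := fun G ↦ by
  obtain rfl | hG := eq_or_ne G ⊥
  · exact .inr ⟨univ, by simp [isNClique_iff]⟩
  · obtain ⟨u, v, huv⟩ := ne_bot_iff_exists_adj.mp hG
    exact .inl ⟨{u, v}, by simp [isNClique_iff, huv, huv.ne]⟩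

theorem add (hm : RamseyArrow m k (l + 1)) (hn : RamseyArrow n (k + 1) l) (hpos : 0 < m + n) :
    RamseyArrow (m + n) (k + 1) (l + 1) := fun G ↦ by
  classical
  let v : Fin (m + n) := ⟨0, hpos⟩
  have hdeg := degree_add_degree_compl_add_one G v
  rw [Fintype.card_fin] at hdeg
  exact hm.exists_isNClique_of_le_degree_or hn (v := v) (by omega)

theorem add_of_even (hm : RamseyArrow m k (l + 1)) (hn : RamseyArrow n (k + 1) l) (hm2 : Even m)
    (hn2 : Even n) (hN : N + 1 = m + n) : RamseyArrow N (k + 1) (l + 1) := fun G ↦ by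
  classical
  suffices ∃ v, m ≤ G.degree v ∨ n ≤ Gᶜ.degree v from
    this.elim fun _ hv ↦ hm.exists_isNClique_of_le_degree_or hn hv
  by_contra! hlt
  -- `G` is regular of odd degree `m - 1` on an odd number of vertices.
  have hdeg (v : Fin N) : G.degree v + 1 = m := by
    have hsum := degree_add_degree_compl_add_one G v
    have := hlt v
    rw [Fintype.card_fin] at hsum
    omega
  have hodd (v : Fin N) : Odd (G.degree v) := by
    rw [← hdeg v, Nat.even_add_one, Nat.not_even_iff_odd] at hm2
    exact hm2
  have hN_even : Even N := by
    simpa only [hodd, filter_true, card_univ, Fintype.card_fin] using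
      G.even_card_odd_degree_vertices
  exact Nat.even_add_one.mp (hN ▸ hm2.add hn2) hN_even

end RamseyArrow

theorem ramseyArrow_six_three_three : RamseyArrow 6 3 3 :=
  (RamseyArrow.two_left 3).add (RamseyArrow.two_left 3).symm (by norm_num)

theorem ramseyArrow_nine_three_four : RamseyArrow 9 3 4 :=
  (RamseyArrow.two_left 4).add_of_even ramseyArrow_six_three_three (by decide) (by decide)
    (by norm_num)

end Ramsey

section OrderedRamsey

variable {α β : Type*} {n N M : ℕ}

/-- The graph of the edges of color `b`. Only the values `c x y` with `x < y` matter. -/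
def colorGraph [LT α] (c : α → α → Bool) (b : Bool) : SimpleGraph α :=
  .fromRel fun x y ↦ x < y ∧ c x y = b

theorem colorGraph_adj_of_lt [Preorder α] {c : α → α → Bool} {b : Bool} {x y : α}
    (h : x < y) : (colorGraph c b).Adj x y ↔ c x y = b := by
  simp [colorGraph, h, h.ne, h.not_gt]

theorem compl_colorGraph [LinearOrder α] (c : α → α → Bool) (b : Bool) :
    (colorGraph c b)ᶜ = colorGraph c !b := by
  ext x y
  have key {x y : α} (h : x < y) : (colorGraph c b)ᶜ.Adj x y ↔ (colorGraph c !b).Adj x y := by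
    rw [compl_adj, colorGraph_adj_of_lt h, colorGraph_adj_of_lt h, Bool.eq_not]
    exact and_iff_right h.ne
  obtain h | rfl | h := lt_trichotomy x y
  · exact key h
  · simp
  · rw [adj_comm, key h, adj_comm]

/-- The edge set of `Kₙ` minus the edge `{1, n}`, as an ordered graph on `{1, …, n}`. -/
def completeMinusOuterEdge (n : ℕ) : Finset (ℕ × ℕ) :=
  {e ∈ Icc 1 n ×ˢ Icc 1 n | e.1 < e.2 ∧ e ≠ (1, n)}

theorem mem_completeMinusOuterEdge {i j : ℕ} :
    (i, j) ∈ completeMinusOuterEdge n ↔ 1 ≤ i ∧ i < j ∧ j ≤ n ∧ (i = 1 → j ≠ n) := by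
  simp only [completeMinusOuterEdge, mem_filter, mem_product, mem_Icc, ne_eq, Prod.mk.injEq]
  omega

theorem exists_strictMonoOn_mapsTo (t : Finset ℕ) :
    ∃ φ : ℕ → ℕ, StrictMonoOn φ (Set.Icc 1 #t) ∧ Set.MapsTo φ (Set.Icc 1 #t) t := by
  have hfin : (Set.ofPred (· ∈ t)).Finite := t.finite_toSet
  have hcard : #hfin.toFinset = #t := congrArg card t.finite_toSet_toFinset
  refine ⟨fun i ↦ Nat.nth (· ∈ t) (i - 1), fun i hi j hj hij ↦ ?_, fun i hi ↦ ?_⟩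
  · exact Nat.nth_lt_nth_of_lt_card hfin (by grind) (by grind)
  · exact Nat.nth_mem_of_lt_card hfin (by grind)

theorem eq_and_eq_of_strictMonoOn_of_mapsTo [LinearOrder α] [PartialOrder β] {φ : α → β}
    {a a' i j : α} {b b' : β} (hφ : StrictMonoOn φ (Set.Icc a a'))
    (hmaps : Set.MapsTo φ (Set.Icc a a') (Set.Icc b b')) (hi : i ∈ Set.Icc a a')
    (hj : j ∈ Set.Icc a a') (hib : φ i = b) (hjb : φ j = b') : i = a ∧ j = a' := by
  have ha : a ∈ Set.Icc a a' := ⟨le_rfl, hi.1.trans hi.2⟩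
  have ha' : a' ∈ Set.Icc a a' := ⟨hi.1.trans hi.2, le_rfl⟩
  have hφa : φ a ≤ φ i := hφ.monotoneOn ha hi hi.1
  have hφa' : φ j ≤ φ a' := hφ.monotoneOn hj ha' hj.2
  exact ⟨hφ.injOn hi ha (hφa.antisymm' (hib ▸ (hmaps ha).1)),
    hφ.injOn hj ha' (hφa'.antisymm (hjb ▸ (hmaps ha').2))⟩

theorem containsOrderedCopy_of_isNClique {c : ℕ → ℕ → Bool} {b : Bool} {t : Finset ℕ}
    (htN : t ⊆ Icc 1 N) (ht : (colorGraph c b ⊔ edge 1 N).IsNClique n t) :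
    ContainsOrderedCopy n N (completeMinusOuterEdge n) c b := by
  obtain ⟨φ, φ_mono, φ_mem⟩ := exists_strictMonoOn_mapsTo t
  rw [ht.card_eq] at φ_mono φ_mem
  have φ_bounds : Set.MapsTo φ (Set.Icc 1 n) (Set.Icc 1 N) := fun i hi ↦
    mem_Icc.mp (htN (φ_mem hi))
  refine ⟨φ, fun i hi hin ↦ φ_bounds ⟨hi, hin⟩, fun i j hi hij hjn ↦
    φ_mono ⟨hi, hij.le.trans hjn⟩ ⟨hi.trans hij.le, hjn⟩ hij, fun ⟨i, j⟩ hij ↦ ?_⟩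
  obtain ⟨hi, hij, hjn, houter⟩ := mem_completeMinusOuterEdge.mp hij
  have hi_mem : i ∈ Set.Icc 1 n := ⟨hi, hij.le.trans hjn⟩
  have hj_mem : j ∈ Set.Icc 1 n := ⟨hi.trans hij.le, hjn⟩
  have hlt : φ i < φ j := φ_mono hi_mem hj_mem hij
  have hadj := ht.isClique (φ_mem hi_mem) (φ_mem hj_mem) hlt.ne
  rw [sup_adj, colorGraph_adj_of_lt hlt, edge_adj] at hadj
  obtain hc | ⟨⟨hi1, hjN⟩ | ⟨hiN, -⟩, -⟩ := hadj
  · exact hc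
  · obtain ⟨rfl, rfl⟩ := eq_and_eq_of_strictMonoOn_of_mapsTo φ_mono φ_bounds hi_mem hj_mem hi1 hjN
    exact absurd rfl (houter rfl)
  · exact absurd (φ_bounds hj_mem).2 (hiN ▸ hlt).not_ge

theorem exists_color_le_card_adj_one (c : ℕ → ℕ → Bool) (hN : 2 ≤ N) (hMN : 2 * M ≤ N + 1) :
    ∃ b, ∃ S ⊆ Icc 2 N, M ≤ #S ∧ ∀ x ∈ S, (colorGraph c b ⊔ edge 1 N).Adj 1 x := by
  classical
  let S (b : Bool) : Finset ℕ := {x ∈ Icc 2 N | (colorGraph c b ⊔ edge 1 N).Adj 1 x}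
  have mem_S {b : Bool} {x : ℕ} (hx : x ∈ Icc 2 N) : x ∈ S b ↔ c 1 x = b ∨ x = N := by
    have h1x : 1 < x := (mem_Icc.mp hx).1
    simp only [S, mem_filter, hx, true_and, sup_adj, colorGraph_adj_of_lt h1x, edge_adj]
    grind
  have hunion : Icc 2 N ⊆ S true ∪ S false := fun x hx ↦ by
    rw [mem_union, mem_S hx, mem_S hx]
    grind
  have hinter : {N} ⊆ S true ∩ S false := by
    have hNmem : N ∈ Icc 2 N := mem_Icc.mpr ⟨hN, le_rfl⟩
    simp [mem_S hNmem]
  suffices ∃ b, M ≤ #(S b) from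
    this.imp fun b hb ↦ ⟨S b, filter_subset _ _, hb, fun x hx ↦ (mem_filter.mp hx).2⟩
  by_contra! hlt
  have hsum : N ≤ #(S true) + #(S false) :=
    calc N = #(Icc 2 N) + #{N} := by rw [Nat.card_Icc, card_singleton]; omega
      _ ≤ #(S true ∪ S false) + #(S true ∩ S false) := by gcongr
      _ = #(S true) + #(S false) := card_union_add_card_inter _ _
  have := hlt true
  have := hlt false
  omega

theorem RamseyArrow.containsMonoOrderedCopy_completeMinusOuterEdge (h : RamseyArrow M n (n + 1))
    (hN : 2 ≤ N) (hMN : 2 * M ≤ N + 1) (c : ℕ → ℕ → Bool) :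
    ContainsMonoOrderedCopy (n + 1) N (completeMinusOuterEdge (n + 1)) c := by
  obtain ⟨b, S, hSN, hMS, hS⟩ := exists_color_le_card_adj_one c hN hMN
  have hSN' : S ⊆ Icc 1 N := hSN.trans (Icc_subset_Icc_left one_le_two)
  obtain ⟨s, hsS, hs⟩ | ⟨s, hsS, hs⟩ := h.exists_isNClique_subset (colorGraph c b) hMS
  · refine ⟨b, containsOrderedCopy_of_isNClique (t := insert 1 s) ?_ ?_⟩
    · exact insert_subset (mem_Icc.mpr ⟨le_rfl, by omega⟩) (hsS.trans hSN')
    · exact (hs.mono le_sup_left).insert fun x hx ↦ hS x (hsS hx)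
  · rw [compl_colorGraph] at hs
    exact ⟨!b, containsOrderedCopy_of_isNClique (hsS.trans hSN') (hs.mono le_sup_left)⟩

end OrderedRamsey

/-- Every 2-coloring of the edges of the complete graph on `{1,…,17}` contains a
monochromatic ordered copy of the diamond `K₄ - e` with ordering `A`
(all edges of `K₄` on `{1,2,3,4}` except `(1, 4)`), i.e. `r_<(K₄ - e) ≤ 17`
for this ordering. -/
theorem orderedRamsey_diamond_A_le :
    ∀ c : ℕ → ℕ → Bool,
      ContainsMonoOrderedCopy 4 17 {(1, 2), (1, 3), (2, 3), (2, 4), (3, 4)} c := by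
  have hdiamond : completeMinusOuterEdge 4 = {(1, 2), (1, 3), (2, 3), (2, 4), (3, 4)} := by decide
  rw [← hdiamond]
  exact ramseyArrow_nine_three_four.containsMonoOrderedCopy_completeMinusOuterEdge (by norm_num)
    (by norm_num)
end

section
/- The ordered Ramsey number of the ordered diamond graph K₄ − e with ordering B (vertex set {1,2,3,4}, all edges of K₄ except {3,4}) is at most 15: every 2-coloring of the edges of the complete graph on {1,...,15} contains a monochromatic ordered copy of this graph. -/
/-!
The diamond with ordering `B` is the book with two pages whose spine precedes its pages, and for
every `m ≥ 1` the book with `m` pages ordered in this way has ordered Ramsey number at most `6 * m`.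

If there is no monochromatic book, the first vertex `r` sends one color `b` to at least `3 * m`
later vertices. Let `s` be the first of them. The edge `rs` is not the spine of a book, so `s` sends
the color `!b` to at least `2 * m` of the others. Let `t` be the first of these. Each of the at
least `2 * m - 1` vertices left is joined to `t` in color `b`, and is then a page on the spine `rt`,
or in color `!b`, and is then a page on the spine `st`. One of the two spines therefore has `m`
pages.
-/

open Finset

section Selection

variable {α : Type*}

theorem card_filter_eq_add_card_filter_eq_not (S : Finset α) (f : α → Bool) (b : Bool) :
    #{x ∈ S | f x = b} + #{x ∈ S | f x = !b} = #S := by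
  simp only [Bool.eq_not_iff, ne_eq, card_filter_add_card_filter_not]

theorem exists_mem_card_filter_lt_add_one [LinearOrder α] {S : Finset α} (hS : S.Nonempty) :
    ∃ s ∈ S, #{x ∈ S | s < x} + 1 = #S := by
  refine ⟨S.min' hS, S.min'_mem hS, ?_⟩
  have later_eq_erase : {x ∈ S | S.min' hS < x} = S.erase (S.min' hS) := by
    ext x
    simp only [mem_filter, mem_erase]
    exact ⟨fun h => ⟨h.2.ne', h.1⟩, fun h => ⟨h.2, (S.min'_le x h.2).lt_of_ne' h.1⟩⟩
  rw [later_eq_erase, card_erase_add_one (S.min'_mem hS)]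

theorem exists_strictMonoOn_Iio_of_le_card {m : ℕ} {P : Finset ℕ} (hm : m ≤ #P) :
    ∃ e : ℕ → ℕ, (∀ i < m, e i ∈ P) ∧ StrictMonoOn e (Set.Iio m) := by
  have lt_card : ∀ i < m, ∀ hf : {x | x ∈ P}.Finite, i < #hf.toFinset := by
    intro i hi hf
    rw [show hf.toFinset = P by ext x; simp]
    exact hi.trans_le hm
  exact ⟨Nat.nth (· ∈ P), fun i hi => Nat.nth_mem i (lt_card i hi),
    fun i _ j hj hij => Nat.nth_lt_nth' hij (lt_card j hj)⟩

end Selection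

section Book

/-- The edge set, on the vertex set `{1,…,m + 2}`, of the ordered book with `m` pages whose spine
comes first: `m` triangles sharing the edge `(1, 2)`. -/
def spineFirstBook (m : ℕ) : Finset (ℕ × ℕ) :=
  insert (1, 2) ({1, 2} ×ˢ Icc 3 (m + 2))

variable {α : Type*} [LinearOrder α]

/-- The coloring `c` has inside the vertex set `V` a monochromatic book with at least `m` pages,
all of them after its spine `p < q`. Only the values `c x y` with `x < y` are read. -/
def HasMonoBook (c : α → α → Bool) (m : ℕ) (V : Finset α) : Prop :=
  ∃ p ∈ V, ∃ q ∈ V, p < q ∧ m ≤ #{x ∈ V | q < x ∧ c p x = c p q ∧ c q x = c p q}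

variable {c : α → α → Bool} {m : ℕ} {V : Finset α}

theorem card_filter_lt_of_not_hasMonoBook (h : ¬ HasMonoBook c m V) {p q : α} (hp : p ∈ V)
    (hq : q ∈ V) (hpq : p < q) {b : Bool} (hb : c p q = b) {S : Finset α} (hSV : S ⊆ V)
    (hS : ∀ x ∈ S, q < x ∧ c p x = b) : #{x ∈ S | c q x = b} < m := by
  subst hb
  by_contra! hm
  refine h ⟨p, hp, q, hq, hpq, hm.trans (card_le_card fun x hx => ?_)⟩
  obtain ⟨hxS, hqx⟩ := mem_filter.mp hx
  exact mem_filter.mpr ⟨hSV hxS, (hS x hxS).1, (hS x hxS).2, hqx⟩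

theorem hasMonoBook_of_three_mul_le_card (hm : 1 ≤ m) {r : α} (hr : r ∈ V) {b : Bool}
    {A : Finset α} (hAV : A ⊆ V) (hA : ∀ x ∈ A, r < x ∧ c r x = b) (hcard : 3 * m ≤ #A) :
    HasMonoBook c m V := by
  by_contra h
  obtain ⟨s, hsA, hs⟩ := exists_mem_card_filter_lt_add_one (card_pos.mp (by omega : 0 < #A))
  obtain ⟨hrs, hcrs⟩ := hA s hsA
  set S := {x ∈ A | s < x}
  have hSA : S ⊆ A := filter_subset _ _
  have pages_rs : #{x ∈ S | c s x = b} < m :=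
    card_filter_lt_of_not_hasMonoBook h hr (hAV hsA) hrs hcrs (hSA.trans hAV)
      fun x hx => ⟨(mem_filter.mp hx).2, (hA x (hSA hx)).2⟩
  have split_S := card_filter_eq_add_card_filter_eq_not S (c s) b
  obtain ⟨t, htB, ht⟩ := exists_mem_card_filter_lt_add_one
    (card_pos.mp (by omega : 0 < #{x ∈ S | c s x = !b}))
  obtain ⟨htS, hcst⟩ := mem_filter.mp htB
  obtain ⟨htA, hst⟩ := mem_filter.mp htS
  obtain ⟨hrt, hcrt⟩ := hA t htA
  set B := {x ∈ S | c s x = !b}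
  set T := {x ∈ B | t < x}
  have hTB : T ⊆ B := filter_subset _ _
  have hTA : T ⊆ A := hTB.trans ((filter_subset _ _).trans hSA)
  have pages_rt : #{x ∈ T | c t x = b} < m :=
    card_filter_lt_of_not_hasMonoBook h hr (hAV htA) hrt hcrt (hTA.trans hAV)
      fun x hx => ⟨(mem_filter.mp hx).2, (hA x (hTA hx)).2⟩
  have pages_st : #{x ∈ T | c t x = !b} < m :=
    card_filter_lt_of_not_hasMonoBook h (hAV hsA) (hAV htA) hst hcst (hTA.trans hAV)
      fun x hx => ⟨(mem_filter.mp hx).2, (mem_filter.mp (hTB hx)).2⟩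
  have split_T := card_filter_eq_add_card_filter_eq_not T (c t) b
  omega

theorem hasMonoBook_of_six_mul_le_card (c : α → α → Bool) (hm : 1 ≤ m) (hV : 6 * m ≤ #V) :
    HasMonoBook c m V := by
  obtain ⟨r, hr, hcard⟩ := exists_mem_card_filter_lt_add_one (card_pos.mp (by omega : 0 < #V))
  obtain ⟨b, hb⟩ : ∃ b, 3 * m ≤ #{x ∈ {x ∈ V | r < x} | c r x = b} := by
    by_contra! hlt
    have split_later := card_filter_eq_add_card_filter_eq_not {x ∈ V | r < x} (c r) true
    have := hlt true
    have := hlt (!true)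
    omega
  refine hasMonoBook_of_three_mul_le_card hm hr (b := b)
    ((filter_subset _ _).trans (filter_subset _ _)) (fun x hx => ?_) hb
  obtain ⟨hx, hrx⟩ := mem_filter.mp hx
  exact ⟨(mem_filter.mp hx).2, hrx⟩

end Book

theorem HasMonoBook.containsMonoOrderedCopy {c : ℕ → ℕ → Bool} {m N : ℕ}
    (h : HasMonoBook c m (Icc 1 N)) :
    ContainsMonoOrderedCopy (m + 2) N (spineFirstBook m) c := by
  obtain ⟨p, hp, q, hq, hpq, hm⟩ := h
  obtain ⟨e, he, hmono⟩ := exists_strictMonoOn_Iio_of_le_card hm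
  simp only [mem_filter, mem_Icc] at hp hq he
  let φ : ℕ → ℕ
    | 0 | 1 => p
    | 2 => q
    | i + 3 => e i
  refine ⟨c p q, φ, ?_, ?_, ?_⟩
  · rintro (_ | _ | _ | i) _ hi
    · omega
    · exact hp
    · exact hq
    · exact (he i (by omega)).1
  · rintro (_ | _ | _ | i) (_ | _ | _ | j) _ hij hj
    any_goals omega
    · exact hpq.trans (he j (by omega)).2.1
    · exact (he j (by omega)).2.1
    · exact hmono (Set.mem_Iio.mpr (by omega)) (Set.mem_Iio.mpr (by omega)) (by omega)
  · rintro ⟨i, j⟩ hij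
    simp only [spineFirstBook, mem_insert, mem_product, mem_singleton, mem_Icc,
      Prod.mk.injEq] at hij
    obtain ⟨rfl, rfl⟩ | ⟨rfl | rfl, h3, hj⟩ := hij
    · rfl
    · obtain ⟨j, rfl⟩ := Nat.exists_eq_add_of_le' h3
      exact (he j (by omega)).2.2.1
    · obtain ⟨j, rfl⟩ := Nat.exists_eq_add_of_le' h3
      exact (he j (by omega)).2.2.2

theorem orderedRamsey_diamond_B_le_general {m N : ℕ} (hm : 1 ≤ m) (hN : 6 * m ≤ N)
    (c : ℕ → ℕ → Bool) : ContainsMonoOrderedCopy (m + 2) N (spineFirstBook m) c :=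
  (hasMonoBook_of_six_mul_le_card c hm (by simpa using hN)).containsMonoOrderedCopy

/-- Every 2-coloring of the edges of the complete graph on `{1,…,15}` contains a
monochromatic ordered copy of the diamond `K₄ - e` with ordering `B`
(all edges of `K₄` on `{1,2,3,4}` except `(3, 4)`), i.e. `r_<(K₄ - e) ≤ 15`
for this ordering. -/
theorem orderedRamsey_diamond_B_le :
    ∀ c : ℕ → ℕ → Bool,
      ContainsMonoOrderedCopy 4 15 {(1, 2), (1, 3), (1, 4), (2, 3), (2, 4)} c :=
  orderedRamsey_diamond_B_le_general (m := 2) (by norm_num) (by norm_num)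
end

section
/- The ordered Ramsey number of the ordered diamond graph K₄ − e with ordering C (vertex set {1,2,3,4}, all edges of K₄ except {1,3}) is at most 14: every 2-coloring of the edges of the complete graph on {1,...,14} contains a monochromatic ordered copy of this graph. -/
/-!
Let `w` be the largest of the 14 vertices. Seven of the other 13 are joined to `w` in the same
color `b`. If these seven contain an increasing path `x < y < z` in color `b`, then `x, y, z, w` is
a diamond in color `b`. Otherwise no upper end of a `b`-edge among the seven is also a lower end,
so both the class of upper ends and its complement span no `b`-edge. One of these two classes has at
least four vertices, hence contains a `K₄` in the other color.
-/

section

open Finset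

variable {α κ : Type*}

theorem exists_isAntichain_of_forall_not_rel {r : α → α → Prop} {s : Finset α} {n : ℕ}
    (hn : 2 * n < #s) (hr : ∀ x ∈ s, ∀ y ∈ s, ∀ z ∈ s, r x y → ¬ r y z) :
    ∃ t ⊆ s, n < #t ∧ IsAntichain r (t : Set α) := by
  classical
  obtain ⟨p, -, hp⟩ := exists_lt_card_fiber_of_mul_lt_card_of_maps_to
    (s := s) (t := univ) (f := fun y ↦ decide (∃ x ∈ s, r x y)) (fun _ _ ↦ mem_univ _) hn
  refine ⟨_, filter_subset _ s, hp, fun y hy z hz _ hyz ↦ ?_⟩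
  obtain ⟨hys, hyp⟩ := mem_filter.1 hy
  obtain ⟨hzs, hzp⟩ := mem_filter.1 hz
  have hz_upper : ∃ y ∈ s, r y z := ⟨y, hys, hyz⟩
  have hy_upper : ∃ x ∈ s, r x y := by
    rwa [← decide_eq_decide.1 (hzp.trans hyp.symm)]
  obtain ⟨x, hxs, hxy⟩ := hy_upper
  exact hr x hxs y hys z hzs hxy hyz

/-- The vertex set `s` contains an ordered copy, in color `b`, of the diamond `K₄ - e` with
ordering `C`: four vertices `x < y < z < w` all of whose edges except possibly `(x, z)` have color
`b`. Only the values `c u v` with `u < v` matter. -/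
def HasDiamond [LT α] (c : α → α → κ) (b : κ) (s : Finset α) : Prop :=
  ∃ x ∈ s, ∃ y ∈ s, ∃ z ∈ s, ∃ w ∈ s, x < y ∧ y < z ∧ z < w ∧
    c x y = b ∧ c x w = b ∧ c y z = b ∧ c y w = b ∧ c z w = b

namespace HasDiamond

theorem mono [LT α] {c : α → α → κ} {b : κ} {s t : Finset α} (hst : s ⊆ t)
    (h : HasDiamond c b s) : HasDiamond c b t := by
  obtain ⟨x, hx, y, hy, z, hz, w, hw, h⟩ := h
  exact ⟨x, hst hx, y, hst hy, z, hst hz, w, hst hw, h⟩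

theorem insert_of_path [LT α] [DecidableEq α] {c : α → α → κ} {b : κ} {s : Finset α}
    {w x y z : α} (hw : ∀ v ∈ s, v < w ∧ c v w = b) (hx : x ∈ s) (hy : y ∈ s)
    (hz : z ∈ s) (hxy : x < y ∧ c x y = b) (hyz : y < z ∧ c y z = b) :
    HasDiamond c b (insert w s) :=
  ⟨x, mem_insert_of_mem hx, y, mem_insert_of_mem hy, z, mem_insert_of_mem hz,
    w, mem_insert_self w s, hxy.1, hyz.1, (hw z hz).1,
    hxy.2, (hw x hx).2, hyz.2, (hw y hy).2, (hw z hz).2⟩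

variable [LinearOrder α]

theorem of_clique {c : α → α → κ} {b : κ} {s : Finset α} (hs : 4 ≤ #s)
    (hc : ∀ x ∈ s, ∀ y ∈ s, x < y → c x y = b) : HasDiamond c b s := by
  obtain ⟨t, hts, ht⟩ := exists_subset_card_eq hs
  let v := t.orderEmbOfFin ht
  have hv (i : Fin 4) : v i ∈ s := hts (t.orderEmbOfFin_mem ht i)
  have hlt {i j : Fin 4} (hij : i < j) : v i < v j := v.strictMono hij
  have hcol {i j : Fin 4} (hij : i < j) : c (v i) (v j) = b := hc _ (hv i) _ (hv j) (hlt hij)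
  exact ⟨v 0, hv 0, v 1, hv 1, v 2, hv 2, v 3, hv 3, hlt (by decide), hlt (by decide),
    hlt (by decide), hcol (by decide), hcol (by decide), hcol (by decide), hcol (by decide),
    hcol (by decide)⟩

theorem insert_or_other_color {c : α → α → Bool} {b : Bool} {s : Finset α} {w : α} (hs : 7 ≤ #s)
    (hw : ∀ v ∈ s, v < w ∧ c v w = b) :
    HasDiamond c b (insert w s) ∨ HasDiamond c (!b) s := by
  refine or_iff_not_imp_left.2 fun hno ↦ ?_
  obtain ⟨t, hts, ht, hanti⟩ :=
    exists_isAntichain_of_forall_not_rel (r := fun x y ↦ x < y ∧ c x y = b) (n := 3) hs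
      fun x hx y hy z hz hxy hyz ↦ hno (insert_of_path hw hx hy hz hxy hyz)
  have hclique : ∀ x ∈ t, ∀ y ∈ t, x < y → c x y = !b := fun x hx y hy hxy ↦
    Bool.eq_not.2 fun hb ↦ hanti hx hy hxy.ne ⟨hxy, hb⟩
  exact (of_clique ht hclique).mono hts

theorem containsOrderedCopy {N : ℕ} {c : ℕ → ℕ → Bool} {b : Bool}
    (h : HasDiamond c b (Icc 1 N)) :
    ContainsOrderedCopy 4 N {(1, 2), (1, 4), (2, 3), (2, 4), (3, 4)} c b := by
  obtain ⟨x, hx, y, hy, z, hz, w, hw, hxy, hyz, hzw, hcol⟩ := h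
  rw [mem_Icc] at hx hy hz hw
  refine ⟨fun i ↦ if i = 1 then x else if i = 2 then y else if i = 3 then z else w, ?_, ?_, ?_⟩
  · intro i _ _
    dsimp only
    split_ifs <;> assumption
  · intro i j _ _ _
    dsimp only
    split_ifs <;> omega
  · simpa using hcol

end HasDiamond

theorem orderedRamsey_diamond_C_le_general [LinearOrder α] (c : α → α → Bool) {s : Finset α}
    (hs : 14 ≤ #s) : ∃ b, HasDiamond c b s := by
  have hne : s.Nonempty := card_pos.1 (by lia)
  let w := s.max' hne
  have hw : w ∈ s := s.max'_mem hne
  have hcard : #(univ : Finset Bool) * 6 < #(s.erase w) := by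
    rw [card_erase_of_mem hw, card_univ, Fintype.card_bool]
    lia
  obtain ⟨b, -, hb⟩ := exists_lt_card_fiber_of_mul_lt_card_of_maps_to
    (f := fun v ↦ c v w) (fun _ _ ↦ mem_univ _) hcard
  let t : Finset α := {v ∈ s.erase w | c v w = b}
  have ht : t ⊆ s := (filter_subset _ _).trans (erase_subset w s)
  have htw : ∀ v ∈ t, v < w ∧ c v w = b := fun v hv ↦
    have ⟨hvs, hvb⟩ := mem_filter.1 hv
    ⟨s.lt_max'_of_mem_erase_max' hne hvs, hvb⟩
  rcases HasDiamond.insert_or_other_color hb htw with h | h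
  · exact ⟨b, h.mono (insert_subset hw ht)⟩
  · exact ⟨!b, h.mono ht⟩

end

/-- Every 2-coloring of the edges of the complete graph on `{1,…,14}` contains a
monochromatic ordered copy of the diamond `K₄ - e` with ordering `C`
(all edges of `K₄` on `{1,2,3,4}` except `(1, 3)`), i.e. `r_<(K₄ - e) ≤ 14`
for this ordering. -/
theorem orderedRamsey_diamond_C_le :
    ∀ c : ℕ → ℕ → Bool,
      ContainsMonoOrderedCopy 4 14 {(1, 2), (1, 4), (2, 3), (2, 4), (3, 4)} c := by
  intro c
  obtain ⟨b, hb⟩ := orderedRamsey_diamond_C_le_general c (s := Finset.Icc 1 14) (by simp)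
  exact ⟨b, hb.containsOrderedCopy⟩
end

section
/- The ordered Ramsey number of the 3-pan graph with ordering A (vertex set {1,2,3,4}, edge set {{2,3},{2,4},{3,4},{1,4}}, i.e., a triangle on {2,3,4} with a pendant edge from vertex 1 to vertex 4) is at most 10: every 2-coloring of the edges of the complete graph on {1,...,10} contains a monochromatic ordered copy of this graph. -/
open Finset

variable {k m n N : ℕ} {E : Finset (ℕ × ℕ)} {c : ℕ → ℕ → Bool} {b : Bool}

theorem exists_strictMonoOn_mapsTo_of_le_card {s : Finset ℕ} (hn : n ≤ #s) :
    ∃ f : ℕ → ℕ, StrictMonoOn f (Set.Icc 1 n) ∧ Set.MapsTo f (Set.Icc 1 n) s := by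
  have hindex {i : ℕ} (hi : i ∈ Set.Icc 1 n) (hfin : (s : Set ℕ).Finite) :
      i - 1 < #hfin.toFinset := by
    rw [finite_toSet_toFinset]
    exact (Nat.sub_one_lt_of_lt hi.1).trans_le (hi.2.trans hn)
  refine ⟨fun i ↦ Nat.nth (· ∈ s) (i - 1), fun i hi j hj hij ↦ ?_, fun i hi ↦ ?_⟩
  · exact Nat.nth_lt_nth' (Nat.sub_lt_sub_right hi.1 hij) (hindex hj)
  · exact Nat.nth_mem (i - 1) (hindex hi)

/-- The edge set of the ordered star on `{1, …, m + 1}` whose center is its last vertex. -/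
def inStar (m : ℕ) : Finset (ℕ × ℕ) :=
  (Icc 1 m).image (·, m + 1)

theorem mem_inStar {e : ℕ × ℕ} : e ∈ inStar m ↔ 1 ≤ e.1 ∧ e.1 ≤ m ∧ e.2 = m + 1 := by
  simp only [inStar, mem_image, mem_Icc, Prod.ext_iff]
  grind

/-- The edge set of the ordered graph on `{1, …, k + 3}` consisting of a triangle on the last three
vertices and `k` pendant edges from `1, …, k` to the last vertex. It is encoded as a star plus one
edge; the 3-pan with ordering `A` is the case `k = 1`. -/
def leftPan (k : ℕ) : Finset (ℕ × ℕ) :=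
  insert (k + 1, k + 2) (inStar (k + 2))

theorem lt_of_mem_leftPan {e : ℕ × ℕ} (he : e ∈ leftPan k) :
    1 ≤ e.1 ∧ e.1 < e.2 ∧ e.2 ≤ k + 3 := by
  rw [leftPan, mem_insert, mem_inStar] at he
  grind

namespace ContainsOrderedCopy

theorem of_comp {f : ℕ → ℕ} (hf : StrictMonoOn f (Set.Icc 1 m))
    (hfN : Set.MapsTo f (Set.Icc 1 m) (Set.Icc 1 N))
    (h : ContainsOrderedCopy n m E (fun x y ↦ c (f x) (f y)) b) :
    ContainsOrderedCopy n N E c b := by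
  obtain ⟨φ, hφm, hφ, hφE⟩ := h
  refine ⟨f ∘ φ, fun i hi hin ↦ hfN (hφm i hi hin), fun i j hi hij hjn ↦ ?_, hφE⟩
  exact hf (hφm i hi (hij.le.trans hjn)) (hφm j (hi.trans hij.le) hjn) (hφ i j hi hij hjn)

theorem of_clique (hE : ∀ e ∈ E, 1 ≤ e.1 ∧ e.1 < e.2 ∧ e.2 ≤ n) (hN : k + n ≤ N)
    (hc : ∀ x y, k < x → x < y → y ≤ k + n → c x y = b) :
    ContainsOrderedCopy n N E c b := by
  refine ⟨(k + ·), fun i _ _ ↦ by grind, fun i j _ hij _ ↦ Nat.add_lt_add_left hij k,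
    fun e he ↦ ?_⟩
  obtain ⟨hpos, hlt, hle⟩ := hE e he
  exact hc _ _ (Nat.lt_add_of_pos_right hpos) (Nat.add_lt_add_left hlt k)
    (Nat.add_le_add_left hle k)

theorem leftPan_of_star_of_edge {x y : ℕ} (hstar : ∀ z, 1 ≤ z → z ≤ m → c z (m + 1) = b)
    (hkx : k < x) (hxy : x < y) (hym : y ≤ m) (hedge : c x y = b) :
    ContainsOrderedCopy (k + 3) (m + 1) (leftPan k) c b := by
  let φ : ℕ → ℕ := fun i ↦
    if i ≤ k then i else if i = k + 1 then x else if i = k + 2 then y else m + 1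
  refine ⟨φ, fun i _ _ ↦ by grind, fun i j _ _ _ ↦ by grind, fun e he ↦ ?_⟩
  rw [leftPan, mem_insert, mem_inStar] at he
  rcases he with rfl | ⟨hpos, hle, hcenter⟩
  · simpa [φ] using hedge
  · have hφ : 1 ≤ φ e.1 ∧ φ e.1 ≤ m := by grind
    simpa [φ, hcenter] using hstar (φ e.1) hφ.1 hφ.2

end ContainsOrderedCopy

theorem containsMonoOrderedCopy_inStar (hm : 0 < m) (c : ℕ → ℕ → Bool) :
    ContainsMonoOrderedCopy (m + 1) (2 * m) (inStar m) c := by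
  obtain ⟨b, -, hb⟩ : ∃ b ∈ univ, m - 1 < #{x ∈ Icc 1 (2 * m - 1) | c x (2 * m) = b} :=
    exists_lt_card_fiber_of_mul_lt_card_of_maps_to (fun _ _ ↦ mem_univ _)
      (by simp only [card_univ, Fintype.card_bool, Nat.card_Icc]; omega)
  obtain ⟨f, hf, hfs⟩ := exists_strictMonoOn_mapsTo_of_le_card (Nat.le_of_pred_lt hb)
  have hleaf {i : ℕ} (hi : 1 ≤ i) (him : i ≤ m) :
      (1 ≤ f i ∧ f i ≤ 2 * m - 1) ∧ c (f i) (2 * m) = b := by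
    simpa only [mem_filter, mem_Icc] using mem_coe.mp (hfs ⟨hi, him⟩)
  refine ⟨b, fun i ↦ if i ≤ m then f i else 2 * m, fun i hi _ ↦ ?_, fun i j hi hij hj ↦ ?_,
    fun e he ↦ ?_⟩
  · grind
  · by_cases hjm : j ≤ m
    · simpa [hjm, hij.le.trans hjm] using hf ⟨hi, hij.le.trans hjm⟩ ⟨hi.trans hij.le, hjm⟩ hij
    · grind
  · obtain ⟨hpos, hle, hcenter⟩ := mem_inStar.mp he
    simpa [hle, hcenter] using (hleaf hpos hle).2

theorem containsMonoOrderedCopy_leftPan_of_star (hm : 2 * k + 3 ≤ m)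
    (hstar : ∀ z, 1 ≤ z → z ≤ m → c z (m + 1) = b) :
    ContainsMonoOrderedCopy (k + 3) (m + 1) (leftPan k) c := by
  by_cases hedge : ∃ x y, k < x ∧ x < y ∧ y ≤ m ∧ c x y = b
  · obtain ⟨x, y, hkx, hxy, hym, hxyb⟩ := hedge
    exact ⟨b, .leftPan_of_star_of_edge hstar hkx hxy hym hxyb⟩
  · push Not at hedge
    exact ⟨!b, .of_clique (fun _ ↦ lt_of_mem_leftPan) (by omega) fun x y hkx hxy hy ↦
      Bool.eq_not_of_ne (hedge x y hkx hxy (by omega))⟩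

theorem orderedRamsey_pan_A_le_general (k : ℕ) (c : ℕ → ℕ → Bool) :
    ContainsMonoOrderedCopy (k + 3) (4 * k + 6) (leftPan k) c := by
  obtain ⟨b, f, hfN, hf, hfb⟩ := containsMonoOrderedCopy_inStar (m := 2 * k + 3) (by omega) c
  have hstar : ∀ z, 1 ≤ z → z ≤ 2 * k + 3 → c (f z) (f (2 * k + 3 + 1)) = b := fun z hz hzm ↦
    hfb (z, 2 * k + 3 + 1) (mem_inStar.mpr ⟨hz, hzm, rfl⟩)
  obtain ⟨b', hcopy⟩ := containsMonoOrderedCopy_leftPan_of_star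
    (c := fun x y ↦ c (f x) (f y)) le_rfl hstar
  rw [show 4 * k + 6 = 2 * (2 * k + 3) by ring]
  exact ⟨b', hcopy.of_comp (fun i hi j hj hij ↦ hf i j hi.1 hij hj.2) fun i hi ↦ hfN i hi.1 hi.2⟩

/-- Every 2-coloring of the edges of the complete graph on `{1,…,10}` contains a
monochromatic ordered copy of the 3-pan with ordering `A` (a triangle on
`{2,3,4}` with pendant edge `(1, 4)`), i.e. `r_<(3-pan) ≤ 10` for this ordering. -/
theorem orderedRamsey_pan_A_le :
    ∀ c : ℕ → ℕ → Bool,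
      ContainsMonoOrderedCopy 4 10 {(1, 4), (2, 3), (2, 4), (3, 4)} c := by
  have hpan : leftPan 1 = {(1, 4), (2, 3), (2, 4), (3, 4)} := by decide
  exact fun c ↦ hpan ▸ orderedRamsey_pan_A_le_general 1 c
end

section
/- The ordered Ramsey number of the 3-pan graph with ordering C (vertex set {1,2,3,4}, edge set {{2,3},{2,4},{3,4},{1,2}}, i.e., a triangle on {2,3,4} with a pendant edge from vertex 1 to vertex 2) is at most 11: every 2-coloring of the edges of the complete graph on {1,...,11} contains a monochromatic ordered copy of this graph. -/
/-!
Call a vertex left-monochromatic if all edges to smaller vertices have the same color. If `n + 1`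
vertices above the least vertex `m` are left-monochromatic of the same color, they form a clique of
that color, and `m` supplies the pendant edge. So we may assume that at most `2 * n` vertices other
than `m` are left-monochromatic. If there are at least `r(n + 1, n + 1)` remaining vertices, they
contain a monochromatic clique on `n + 1` vertices, and its least vertex, not being
left-monochromatic, has an edge to the left in the color of the clique. By the Erdős–Szekeres bound
`r(n + 1, n + 1) ≤ (2 * n).choose n`, `2 * n + (2 * n).choose n + 1` vertices suffice, which is
`4 + 6 + 1 = 11` for triangles.
-/

open Finset

section OrderedColoring

variable {α κ : Type*} [LinearOrder α]

/-- The ordered finite set `T` spans a complete graph of color `b`. Only the values of `c` on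
increasing pairs are edge colors. -/
def IsMonoClique (c : α → α → κ) (b : κ) (T : Finset α) : Prop :=
  ∀ x ∈ T, ∀ y ∈ T, x < y → c x y = b

/-- The vertex set `S` contains a clique of color `b` on `k` vertices. -/
def HasMonoClique (c : α → α → κ) (b : κ) (k : ℕ) (S : Finset α) : Prop :=
  ∃ T ⊆ S, #T = k ∧ IsMonoClique c b T

/-- All edges joining `v` to smaller vertices of `V` have color `b`. The least vertex of `V`
satisfies this vacuously for every `b`. -/
def IsLeftMono (c : α → α → κ) (V : Finset α) (b : κ) (v : α) : Prop :=
  ∀ a ∈ V, a < v → c a v = b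

/-- The vertex set `V` contains, in color `b`, a clique on `k` vertices together with a pendant
edge joining the least vertex of the clique to a smaller vertex. For `k = 3` this is the 3-pan with
ordering `C`. -/
def HasMonoPan (c : α → α → κ) (b : κ) (k : ℕ) (V : Finset α) : Prop :=
  ∃ w ∈ V, ∃ T ⊆ V, #T = k ∧ IsMonoClique c b T ∧ ∃ x, IsLeast (T : Set α) x ∧ w < x ∧ c w x = b

theorem HasMonoClique.mono {c : α → α → κ} {b : κ} {k : ℕ} {S S' : Finset α}
    (h : HasMonoClique c b k S) (hS : S ⊆ S') : HasMonoClique c b k S' := by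
  obtain ⟨T, hTS, hcard, hT⟩ := h
  exact ⟨T, hTS.trans hS, hcard, hT⟩

theorem hasMonoClique_one (c : α → α → κ) (b : κ) {S : Finset α} (hS : S.Nonempty) :
    HasMonoClique c b 1 S := by
  obtain ⟨x, hx⟩ := hS
  refine ⟨{x}, singleton_subset_iff.2 hx, card_singleton x, fun y hy z hz hyz => ?_⟩
  rw [mem_singleton] at hy hz
  exact absurd (hy.trans hz.symm) hyz.ne

theorem IsMonoClique.insert {c : α → α → κ} {b : κ} {T : Finset α} {m : α}
    (hT : IsMonoClique c b T) (hm : ∀ x ∈ T, m < x ∧ c m x = b) :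
    IsMonoClique c b (insert m T) := by
  intro x hx y hy hxy
  rcases mem_insert.1 hx with rfl | hxT <;> rcases mem_insert.1 hy with rfl | hyT
  · exact absurd hxy (lt_irrefl _)
  · exact (hm y hyT).2
  · exact absurd hxy (hm x hxT).1.not_gt
  · exact hT x hxT y hyT hxy

theorem HasMonoClique.succ {c : α → α → κ} {b : κ} {k : ℕ} {A S : Finset α} {m : α}
    (h : HasMonoClique c b k A) (hAS : A ⊆ S) (hmS : m ∈ S) (hm : ∀ x ∈ A, m < x ∧ c m x = b) :
    HasMonoClique c b (k + 1) S := by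
  obtain ⟨T, hTA, rfl, hT⟩ := h
  have hmT : ∀ x ∈ T, m < x ∧ c m x = b := fun x hx => hm x (hTA hx)
  exact ⟨insert m T, insert_subset hmS (hTA.trans hAS),
    card_insert_of_notMem fun hmem => lt_irrefl m (hmT m hmem).1, hT.insert hmT⟩

theorem exists_partition_by_color_from_least (c : α → α → Bool) {S : Finset α}
    (hS : S.Nonempty) :
    ∃ m ∈ S, ∃ A ⊆ S, ∃ B ⊆ S, (∀ x ∈ A, m < x ∧ c m x = true) ∧
      (∀ x ∈ B, m < x ∧ c m x = false) ∧ #A + #B + 1 = #S := by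
  let m := S.min' hS
  have hm : m ∈ S := S.min'_mem hS
  have hlt : ∀ x ∈ S.erase m, m < x := fun x hx => S.min'_lt_of_mem_erase_min' hS hx
  refine ⟨m, hm, {x ∈ S.erase m | c m x = true}, (filter_subset _ _).trans (erase_subset m S),
    {x ∈ S.erase m | ¬ c m x = true}, (filter_subset _ _).trans (erase_subset m S),
    fun x hx => ?_, fun x hx => ?_, ?_⟩
  · obtain ⟨hxS, hxc⟩ := mem_filter.1 hx
    exact ⟨hlt x hxS, hxc⟩
  · obtain ⟨hxS, hxc⟩ := mem_filter.1 hx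
    exact ⟨hlt x hxS, Bool.eq_false_of_not_eq_true hxc⟩
  · rw [card_filter_add_card_filter_not, card_erase_add_one hm]

theorem hasMonoClique_or_of_choose_le_card (c : α → α → Bool) (s t : ℕ) {S : Finset α}
    (hS : (s + t).choose s ≤ #S) :
    HasMonoClique c true (s + 1) S ∨ HasMonoClique c false (t + 1) S := by
  have hne : S.Nonempty := card_pos.1 ((Nat.choose_pos (Nat.le_add_right s t)).trans_le hS)
  match s, t, hS with
  | 0, _, _ => exact .inl (hasMonoClique_one c true hne)
  | _ + 1, 0, _ => exact .inr (hasMonoClique_one c false hne)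
  | s + 1, t + 1, hS =>
    obtain ⟨m, hmS, A, hAS, B, hBS, hA, hB, hcard⟩ := exists_partition_by_color_from_least c hne
    have hpascal : (s + 1 + (t + 1)).choose (s + 1) =
        (s + (t + 1)).choose s + (s + 1 + t).choose (s + 1) := by
      rw [Nat.add_right_comm s 1 (t + 1), Nat.choose_succ_succ', Nat.add_right_comm s 1 t,
        Nat.add_assoc s t 1]
    obtain hAcard | hBcard :
        (s + (t + 1)).choose s ≤ #A ∨ (s + 1 + t).choose (s + 1) ≤ #B := by omega
    · exact (hasMonoClique_or_of_choose_le_card c s (t + 1) hAcard).imp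
        (·.succ hAS hmS hA) (·.mono hAS)
    · exact (hasMonoClique_or_of_choose_le_card c (s + 1) t hBcard).imp
        (·.mono hBS) (·.succ hBS hmS hB)
termination_by s + t

theorem IsMonoClique.hasMonoPan {c : α → α → Bool} {b : Bool} {T V : Finset α} {x : α}
    (hT : IsMonoClique c b T) (hTV : T ⊆ V) (hx : IsLeast (T : Set α) x)
    (hleft : ¬ IsLeftMono c V (!b) x) : HasMonoPan c b #T V := by
  unfold IsLeftMono at hleft
  push Not at hleft
  obtain ⟨a, haV, hax, hca⟩ := hleft
  exact ⟨a, haV, T, hTV, rfl, hT, x, hx, hax, by simpa using hca⟩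

theorem hasMonoPan_of_isLeftMono {c : α → α → κ} {b : κ} {n : ℕ} {S V : Finset α} {m : α}
    (hmV : m ∈ V) (hSV : S ⊆ V) (hS : ∀ v ∈ S, m < v ∧ IsLeftMono c V b v) (hcard : n < #S) :
    HasMonoPan c b (n + 1) V := by
  obtain ⟨T, hTS, hTcard⟩ := exists_subset_card_eq hcard
  have hT : IsMonoClique c b T := fun x hx y hy hxy => (hS y (hTS hy)).2 x (hSV (hTS hx)) hxy
  have hne : T.Nonempty := card_pos.1 (by omega)
  obtain ⟨hlt, hleft⟩ := hS _ (hTS (T.min'_mem hne))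
  exact ⟨m, hmV, T, hTS.trans hSV, hTcard, hT, _, T.isLeast_min' hne, hlt, hleft m hmV hlt⟩

theorem exists_hasMonoPan_of_ramsey {c : α → α → Bool} {n R : ℕ} {V : Finset α}
    (hR : ∀ S ⊆ V, R ≤ #S → ∃ b, HasMonoClique c b (n + 1) S) (hV : 2 * n + R < #V) :
    ∃ b, HasMonoPan c b (n + 1) V := by
  classical
  have hne : V.Nonempty := card_pos.1 (by omega)
  let m := V.min' hne
  have hmV : m ∈ V := V.min'_mem hne
  let L (b : Bool) : Finset α := {v ∈ V.erase m | IsLeftMono c V b v}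
  let U : Finset α := {v ∈ V | ∀ b, ¬ IsLeftMono c V b v}
  by_cases hL : ∃ b, n < #(L b)
  · obtain ⟨b, hb⟩ := hL
    refine ⟨b, hasMonoPan_of_isLeftMono hmV ((filter_subset _ _).trans (erase_subset m V)) ?_ hb⟩
    intro v hv
    obtain ⟨hvm, hvL⟩ := mem_filter.1 hv
    exact ⟨V.min'_lt_of_mem_erase_min' hne hvm, hvL⟩
  · push Not at hL
    have hcover : V.erase m ⊆ L true ∪ L false ∪ U := by
      intro v hv
      have hvV := mem_of_mem_erase hv
      by_cases ht : IsLeftMono c V true v <;> by_cases hf : IsLeftMono c V false v <;>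
        simp [L, U, hv, hvV, ht, hf]
    have hUcard : R ≤ #U := by
      have hcard : #(V.erase m) ≤ #(L true) + #(L false) + #U :=
        (card_le_card hcover).trans ((card_union_le _ _).trans
          (Nat.add_le_add_right (card_union_le _ _) _))
      linarith [card_erase_add_one hmV, hL true, hL false]
    obtain ⟨b, T, hTU, hTcard, hT⟩ := hR U (filter_subset _ _) hUcard
    have hTne : T.Nonempty := card_pos.1 (by omega)
    have hnot : ¬ IsLeftMono c V (!b) (T.min' hTne) :=
      (mem_filter.1 (hTU (T.min'_mem hTne))).2 _
    exact ⟨b, hTcard ▸ hT.hasMonoPan (hTU.trans (filter_subset _ _)) (T.isLeast_min' hTne) hnot⟩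

theorem exists_hasMonoPan_of_centralBinom_lt_card (c : α → α → Bool) (n : ℕ) {V : Finset α}
    (hV : 2 * n + n.centralBinom < #V) : ∃ b, HasMonoPan c b (n + 1) V := by
  refine exists_hasMonoPan_of_ramsey (fun S _ hS => ?_) hV
  rw [Nat.centralBinom_eq_two_mul_choose, two_mul] at hS
  exact (hasMonoClique_or_of_choose_le_card c n n hS).elim (⟨true, ·⟩) (⟨false, ·⟩)

end OrderedColoring

theorem exists_strictMonoOn_enumeration {T : Finset ℕ} {x : ℕ} (hx : IsLeast (T : Set ℕ) x) :
    ∃ f : ℕ → ℕ, f 0 = x ∧ (∀ i < #T, f i ∈ T) ∧ StrictMonoOn f (Set.Iio #T) := by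
  have hfin : (Set.ofPred (· ∈ T)).Finite := T.finite_toSet
  have hcard : #hfin.toFinset = #T := congrArg card T.finite_toSet_toFinset
  refine ⟨Nat.nth (· ∈ T), Nat.nth_zero.trans hx.csInf_eq, fun i hi => ?_, ?_⟩
  · exact Nat.nth_mem_of_lt_card hfin (hcard.symm ▸ hi)
  · exact hcard ▸ Nat.nth_strictMonoOn hfin

/-- The edges of the ordered graph on `{1,…,k + 1}` consisting of a complete graph on
`{2,…,k + 1}` and the pendant edge `(1, 2)`. -/
def panEdges (k : ℕ) : Finset (ℕ × ℕ) :=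
  insert (1, 2) {e ∈ Icc 2 (k + 1) ×ˢ Icc 2 (k + 1) | e.1 < e.2}

theorem HasMonoPan.containsOrderedCopy {c : ℕ → ℕ → Bool} {b : Bool} {k N : ℕ}
    (h : HasMonoPan c b k (Icc 1 N)) : ContainsOrderedCopy (k + 1) N (panEdges k) c b := by
  obtain ⟨w, hw, T, hTV, hTcard, hT, x, hx, hwx, hcwx⟩ := h
  obtain ⟨f, hf0, hfT, hfmono⟩ := exists_strictMonoOn_enumeration hx
  rw [hTcard] at hfT hfmono
  let φ : ℕ → ℕ := fun i => if i = 1 then w else f (i - 2)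
  have hφ : ∀ i, 2 ≤ i → φ i = f (i - 2) := fun i hi => if_neg (by omega)
  refine ⟨φ, fun i hi hik => ?_, fun i j hi hij hj => ?_, fun e he => ?_⟩
  · obtain rfl | hi2 : i = 1 ∨ 2 ≤ i := by omega
    · exact mem_Icc.1 hw
    · rw [hφ i hi2]
      exact mem_Icc.1 (hTV (hfT _ (by omega)))
  · rw [hφ j (by omega)]
    obtain rfl | hi2 : i = 1 ∨ 2 ≤ i := by omega
    · exact hwx.trans_le (hx.2 (hfT _ (by omega)))
    · rw [hφ i hi2]
      exact hfmono (Set.mem_Iio.2 (by omega)) (Set.mem_Iio.2 (by omega)) (by omega)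
  · simp only [panEdges, mem_insert, mem_filter, mem_product, mem_Icc] at he
    obtain rfl | ⟨⟨⟨h₁, h₁k⟩, ⟨h₂, h₂k⟩⟩, hlt⟩ := he
    · change c w (f 0) = b
      rw [hf0, hcwx]
    · rw [hφ _ h₁, hφ _ h₂]
      exact hT _ (hfT _ (by omega)) _ (hfT _ (by omega))
        (hfmono (Set.mem_Iio.2 (by omega)) (Set.mem_Iio.2 (by omega)) (by omega))

theorem orderedRamsey_pan_C_le_general (n : ℕ) (c : ℕ → ℕ → Bool) :
    ContainsMonoOrderedCopy (n + 2) (2 * n + n.centralBinom + 1) (panEdges (n + 1)) c := by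
  obtain ⟨b, hb⟩ := exists_hasMonoPan_of_centralBinom_lt_card c n
    (V := Icc 1 (2 * n + n.centralBinom + 1)) (by simp)
  exact ⟨b, hb.containsOrderedCopy⟩

/-- Every 2-coloring of the edges of the complete graph on `{1,…,11}` contains a
monochromatic ordered copy of the 3-pan with ordering `C` (a triangle on
`{2,3,4}` with pendant edge `(1, 2)`), i.e. `r_<(3-pan) ≤ 11` for this ordering. -/
theorem orderedRamsey_pan_C_le :
    ∀ c : ℕ → ℕ → Bool,
      ContainsMonoOrderedCopy 4 11 {(1, 2), (2, 3), (2, 4), (3, 4)} c :=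
  orderedRamsey_pan_C_le_general 2
end

section
/- Let K_m^1 denote the complete-with-1-pendant ordered graph on m+1 vertices: vertex set {1,...,m+1}, with all edges among {2,...,m+1} together with the edge {1,2}. For all m, n ≥ 2, there exists a red/blue coloring of the edges of the complete graph on the ordered vertex set {1,...,R(m,n)+m+n−2} that contains no red ordered copy of K_m^1 and no blue ordered copy of K_n^1, where R(m,n) is the classical Ramsey number. -/
/-- The classical Ramsey number `R(m, n)`: the least `N` such that every red/blue
coloring of the edges of the complete graph on `{1,…,N}` contains a red complete
subgraph on `m` vertices or a blue complete subgraph on `n` vertices.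
(`c i j = true` means edge `(i, j)` (with `i < j`) is red, `false` means blue.) -/
noncomputable def classicalRamsey (m n : ℕ) : ℕ :=
  sInf {N : ℕ | ∀ c : ℕ → ℕ → Bool,
    (∃ S : Finset ℕ, S ⊆ Finset.Icc 1 N ∧ S.card = m ∧
      ∀ i ∈ S, ∀ j ∈ S, i < j → c i j = true) ∨
    (∃ S : Finset ℕ, S ⊆ Finset.Icc 1 N ∧ S.card = n ∧
      ∀ i ∈ S, ∀ j ∈ S, i < j → c i j = false)}

/-- The edge set of the complete-with-1-pendant ordered graph `K_m^1` on `m + 1`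
vertices: all edges among `{2,…,m+1}` together with the edge `(1, 2)`. -/
def pendantEdges (m : ℕ) : Finset (ℕ × ℕ) :=
  insert (1, 2)
    (((Finset.Icc 2 (m + 1)) ×ˢ (Finset.Icc 2 (m + 1))).filter (fun p => p.1 < p.2))

/-!
Write `A`, `B` and `D` for consecutive blocks of `m`, `n - 1` and `R(m, n) - 1` vertices, and color
`D` without a red `K_m` or a blue `K_n`. Make `A` red inside and blue to everything on its right,
and `B` blue inside and red to everything on its right.

Adding `B` in front of `D` creates no blue `K_n`: a blue clique meeting `B` lies inside `B`, which
is too small. It creates no red `K_m^1` either: the second vertex of a red copy has a red edge on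
its left, so it lies in `D` together with the whole `K_m`. Adding `A` exchanges the roles of the two
colors: a red `K_m^1` starting in `A` would lie inside `A`, which is again too small, and a blue
`K_n^1` would have its `K_n` to the right of `A`.
-/

/-- The map `φ` embeds the ordered graph `({1,…,k}, E)` into `{1,…,N}` as a copy of color `b`. This
names the maps whose existence `ContainsOrderedCopy` asserts; values of `φ` outside `{1,…,k}` are
irrelevant as long as `E` has its vertices there. -/
structure IsOrderedCopy (k N : ℕ) (E : Finset (ℕ × ℕ)) (c : ℕ → ℕ → Bool) (b : Bool)
    (φ : ℕ → ℕ) : Prop where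
  mapsTo : Set.MapsTo φ (Set.Icc 1 k) (Set.Icc 1 N)
  strictMonoOn : StrictMonoOn φ (Set.Icc 1 k)
  color_eq : ∀ i j, (i, j) ∈ E → c (φ i) (φ j) = b

/-- The edge set of the complete ordered graph on `{1,…,k}`, as pairs `(i, j)` with `i < j`; it lets
cliques be treated as ordered copies. -/
def completeEdges (k : ℕ) : Finset (ℕ × ℕ) :=
  (Finset.Icc 1 k ×ˢ Finset.Icc 1 k).filter fun e ↦ e.1 < e.2

/-- An ordered graph on `{1,…,k}` in which every vertex but the first has a neighbor on its left, a
form of connectedness shared by the complete and the pendant graphs. Only left endpoints of edges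
are required to be vertices, which makes `pendantEdges 0` an instance on one vertex. -/
structure IsLeftConnected (k : ℕ) (E : Finset (ℕ × ℕ)) : Prop where
  fst_mem : ∀ i j, (i, j) ∈ E → i ∈ Set.Icc 1 k
  exists_left_neighbor : ∀ j ∈ Set.Icc 2 k, ∃ i ∈ Set.Ico 1 j, (i, j) ∈ E

/-- The coloring `c` shifted to start at `s + 1`, preceded by a block of `s` vertices that has color
`b` inside and the opposite color on all edges leaving it. -/
def prependBlock (s : ℕ) (b : Bool) (c : ℕ → ℕ → Bool) : ℕ → ℕ → Bool := fun i j ↦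
  if s < i then c (i - s) (j - s) else if s < j then !b else b

section OrderedCopies

variable {k m N N' : ℕ} {E : Finset (ℕ × ℕ)} {c : ℕ → ℕ → Bool} {b : Bool} {φ : ℕ → ℕ}

theorem containsOrderedCopy_iff_exists_isOrderedCopy :
    ContainsOrderedCopy k N E c b ↔ ∃ φ, IsOrderedCopy k N E c b φ := by
  constructor
  · rintro ⟨φ, hmaps, hmono, hcolor⟩
    exact ⟨φ, fun i hi ↦ hmaps i hi.1 hi.2, fun i hi j hj hij ↦ hmono i j hi.1 hij hj.2,
      fun i j hij ↦ hcolor (i, j) hij⟩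
  · rintro ⟨φ, hφ⟩
    exact ⟨φ, fun i hi hik ↦ hφ.mapsTo ⟨hi, hik⟩,
      fun i j hi hij hj ↦ hφ.strictMonoOn ⟨hi, hij.le.trans hj⟩ ⟨hi.trans hij.le, hj⟩ hij,
      fun e he ↦ hφ.color_eq e.1 e.2 he⟩

theorem IsOrderedCopy.le (hφ : IsOrderedCopy k N E c b φ) : k ≤ N := by
  have hcard : (Finset.Icc 1 k).card ≤ (Finset.Icc 1 N).card :=
    Finset.card_le_card_of_injOn φ (by simpa using hφ.mapsTo)
      (by simpa using hφ.strictMonoOn.injOn)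
  simpa using hcard

theorem ContainsOrderedCopy.mono (hN : N ≤ N') (h : ContainsOrderedCopy k N E c b) :
    ContainsOrderedCopy k N' E c b := by
  obtain ⟨φ, hmaps, hφ⟩ := h
  exact ⟨φ, fun i hi hik ↦ (hmaps i hi hik).imp_right hN.trans', hφ⟩

theorem mem_completeEdges {i j : ℕ} : (i, j) ∈ completeEdges k ↔ 1 ≤ i ∧ i < j ∧ j ≤ k := by
  simp only [completeEdges, Finset.mem_filter, Finset.mem_product, Finset.mem_Icc]
  omega

theorem mem_pendantEdges {i j : ℕ} :
    (i, j) ∈ pendantEdges m ↔ i = 1 ∧ j = 2 ∨ 2 ≤ i ∧ i < j ∧ j ≤ m + 1 := by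
  simp only [pendantEdges, Finset.mem_insert, Prod.mk.injEq, Finset.mem_filter,
    Finset.mem_product, Finset.mem_Icc]
  omega

theorem isLeftConnected_completeEdges (k : ℕ) : IsLeftConnected k (completeEdges k) where
  fst_mem i j hij := by
    obtain ⟨hi, hlt, hj⟩ := mem_completeEdges.1 hij
    exact ⟨hi, hlt.le.trans hj⟩
  exists_left_neighbor j hj := ⟨1, ⟨le_rfl, hj.1⟩, mem_completeEdges.2 ⟨le_rfl, hj⟩⟩

theorem isLeftConnected_pendantEdges (m : ℕ) : IsLeftConnected (m + 1) (pendantEdges m) where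
  fst_mem i j hij := by
    rw [mem_pendantEdges] at hij
    rw [Set.mem_Icc]
    omega
  exists_left_neighbor j hj := by
    obtain rfl | hlt := hj.1.eq_or_lt
    · exact ⟨1, by simp, mem_pendantEdges.2 (.inl ⟨rfl, rfl⟩)⟩
    · exact ⟨2, ⟨one_le_two, hlt⟩, mem_pendantEdges.2 (.inr ⟨le_rfl, hlt, hj.2⟩)⟩

theorem IsOrderedCopy.completeEdges_of_pendantEdges
    (hφ : IsOrderedCopy (m + 1) N (pendantEdges m) c b φ) :
    IsOrderedCopy m N (completeEdges m) c b fun i ↦ φ (i + 1) := by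
  have hsucc : Set.MapsTo (· + 1) (Set.Icc 1 m) (Set.Icc 1 (m + 1)) := fun i hi ↦
    ⟨Nat.le_add_left 1 i, Nat.add_le_add_right hi.2 1⟩
  refine ⟨hφ.mapsTo.comp hsucc, fun i hi j hj hij ↦ ?_, fun i j hij ↦ hφ.color_eq _ _ ?_⟩
  · exact hφ.strictMonoOn (hsucc hi) (hsucc hj) (Nat.add_lt_add_right hij 1)
  · rw [mem_completeEdges] at hij
    rw [mem_pendantEdges]
    omega

theorem IsOrderedCopy.exists_monochromatic_finset
    (hφ : IsOrderedCopy k N (completeEdges k) c b φ) :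
    ∃ S : Finset ℕ, S ⊆ Finset.Icc 1 N ∧ S.card = k ∧
      ∀ i ∈ S, ∀ j ∈ S, i < j → c i j = b := by
  refine ⟨(Finset.Icc 1 k).image φ, ?_, ?_, ?_⟩
  · rw [Finset.image_subset_iff]
    exact fun i hi ↦ Finset.mem_Icc.2 (hφ.mapsTo (Finset.mem_Icc.1 hi))
  · rw [Finset.card_image_of_injOn (by simpa using hφ.strictMonoOn.injOn), Nat.card_Icc,
      Nat.add_sub_cancel]
  · simp only [Finset.forall_mem_image, Finset.mem_Icc]
    intro i hi j hj hlt
    have hij : i < j := (hφ.strictMonoOn.lt_iff_lt hi hj).1 hlt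
    exact hφ.color_eq i j (mem_completeEdges.2 ⟨hi.1, hij, hj.2⟩)

end OrderedCopies

section PrependBlock

variable {k m s N i j : ℕ} {E : Finset (ℕ × ℕ)} {c : ℕ → ℕ → Bool} {b b' : Bool} {φ : ℕ → ℕ}

theorem prependBlock_of_lt (hi : s < i) : prependBlock s b c i j = c (i - s) (j - s) :=
  if_pos hi

theorem prependBlock_eq_self_iff (hi : i ≤ s) : prependBlock s b c i j = b ↔ j ≤ s := by
  simp [prependBlock, hi.not_gt]

theorem IsOrderedCopy.sub_of_prependBlock (hE : ∀ i j, (i, j) ∈ E → i ∈ Set.Icc 1 k)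
    (hφ : IsOrderedCopy k (N + s) E (prependBlock s b' c) b φ) (hs : s < φ 1) :
    IsOrderedCopy k N E c b fun i ↦ φ i - s := by
  have hlt : ∀ i ∈ Set.Icc 1 k, s < φ i := fun i hi ↦
    hs.trans_le (hφ.strictMonoOn.monotoneOn ⟨le_rfl, hi.1.trans hi.2⟩ hi hi.1)
  refine ⟨fun i hi ↦ ?_, fun i hi j hj hij ↦ ?_, fun i j hij ↦ ?_⟩
  · exact ⟨Nat.sub_pos_of_lt (hlt i hi), Nat.sub_le_of_le_add (hφ.mapsTo hi).2⟩
  · exact Nat.sub_lt_sub_right (hlt i hi).le (hφ.strictMonoOn hi hj hij)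
  · exact (prependBlock_of_lt (hlt i (hE i j hij))).symm.trans (hφ.color_eq i j hij)

theorem IsLeftConnected.map_le_of_prependBlock (hE : IsLeftConnected k E)
    (hφ : IsOrderedCopy k N E (prependBlock s b c) b φ) (hs : φ 1 ≤ s) :
    ∀ j ∈ Set.Icc 1 k, φ j ≤ s := by
  intro j
  induction j using Nat.strong_induction_on with
  | _ j ih =>
    intro hj
    obtain rfl | hlt := hj.1.eq_or_lt
    · exact hs
    · obtain ⟨i, hi, hij⟩ := hE.exists_left_neighbor j ⟨hlt, hj.2⟩
      have his : φ i ≤ s := ih i hi.2 ⟨hi.1, hi.2.le.trans hj.2⟩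
      exact (prependBlock_eq_self_iff his).1 (hφ.color_eq i j hij)

theorem IsLeftConnected.not_containsOrderedCopy_prependBlock (hE : IsLeftConnected k E)
    (hs : s < k) (h : ¬ ContainsOrderedCopy k N E c b) :
    ¬ ContainsOrderedCopy k (N + s) E (prependBlock s b c) b := by
  rw [containsOrderedCopy_iff_exists_isOrderedCopy] at h ⊢
  rintro ⟨φ, hφ⟩
  obtain hlt | hle := lt_or_ge s (φ 1)
  · exact h ⟨_, hφ.sub_of_prependBlock hE.fst_mem hlt⟩
  · have hblock : IsOrderedCopy k s E (prependBlock s b c) b φ :=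
      { hφ with
        mapsTo := fun i hi ↦ ⟨(hφ.mapsTo hi).1, hE.map_le_of_prependBlock hφ hle i hi⟩ }
    exact hs.not_ge hblock.le

theorem not_containsOrderedCopy_pendantEdges_prependBlock (hm : 1 ≤ m)
    (h : ¬ ContainsOrderedCopy m N (completeEdges m) c b) :
    ¬ ContainsOrderedCopy (m + 1) (N + s) (pendantEdges m) (prependBlock s (!b) c) b := by
  rw [containsOrderedCopy_iff_exists_isOrderedCopy] at h ⊢
  rintro ⟨φ, hφ⟩
  have h12 : φ 1 < φ 2 := hφ.strictMonoOn (by simp) (by simpa using hm) one_lt_two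
  have hpendant : prependBlock s (!b) c (φ 1) (φ 2) = b :=
    hφ.color_eq 1 2 (mem_pendantEdges.2 (.inl ⟨rfl, rfl⟩))
  have hs : s < φ 2 := by
    by_contra! hle
    have hblock : prependBlock s (!b) c (φ 1) (φ 2) = !b :=
      (prependBlock_eq_self_iff (h12.le.trans hle)).2 hle
    exact Bool.self_ne_not b (hpendant.symm.trans hblock)
  exact h ⟨_, hφ.completeEdges_of_pendantEdges.sub_of_prependBlock
    (isLeftConnected_completeEdges m).fst_mem hs⟩

end PrependBlock

section LowerBound

variable {m n N : ℕ}

theorem exists_coloring_not_containsOrderedCopy_completeEdges (hm : 1 ≤ m) (hn : 1 ≤ n) :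
    ∃ c : ℕ → ℕ → Bool,
      ¬ ContainsOrderedCopy m (classicalRamsey m n - 1) (completeEdges m) c true ∧
      ¬ ContainsOrderedCopy n (classicalRamsey m n - 1) (completeEdges n) c false := by
  simp only [containsOrderedCopy_iff_exists_isOrderedCopy]
  obtain hR | hR := (classicalRamsey m n).eq_zero_or_pos
  -- Since `sInf ∅ = 0`, ruling this case out would take Ramsey's theorem. Here `0 - 1 = 0`, and
  -- there is no room for a single vertex.
  · rw [hR]
    exact ⟨fun _ _ ↦ true, fun ⟨_, hφ⟩ ↦ hm.not_gt (Nat.lt_succ_of_le hφ.le),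
      fun ⟨_, hφ⟩ ↦ hn.not_gt (Nat.lt_succ_of_le hφ.le)⟩
  · obtain ⟨c, hc⟩ := not_forall.1 (Nat.notMem_of_lt_sInf (Nat.sub_one_lt_of_lt hR))
    rw [not_or] at hc
    exact ⟨c, fun ⟨_, hφ⟩ ↦ hc.1 hφ.exists_monochromatic_finset,
      fun ⟨_, hφ⟩ ↦ hc.2 hφ.exists_monochromatic_finset⟩

theorem exists_coloring_not_containsOrderedCopy_pendantEdges {c : ℕ → ℕ → Bool}
    (hm : 1 ≤ m) (hn : 1 ≤ n) (hred : ¬ ContainsOrderedCopy m N (completeEdges m) c true)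
    (hblue : ¬ ContainsOrderedCopy n N (completeEdges n) c false) :
    ∃ c' : ℕ → ℕ → Bool,
      ¬ ContainsOrderedCopy (m + 1) (N + (n - 1) + m) (pendantEdges m) c' true ∧
      ¬ ContainsOrderedCopy (n + 1) (N + (n - 1) + m) (pendantEdges n) c' false := by
  let e := prependBlock (n - 1) false c
  have hred_e : ¬ ContainsOrderedCopy (m + 1) (N + (n - 1)) (pendantEdges m) e true :=
    not_containsOrderedCopy_pendantEdges_prependBlock hm hred
  have hblue_e : ¬ ContainsOrderedCopy n (N + (n - 1)) (completeEdges n) e false :=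
    (isLeftConnected_completeEdges n).not_containsOrderedCopy_prependBlock
      (Nat.sub_one_lt_of_lt hn) hblue
  exact ⟨prependBlock m true e,
    (isLeftConnected_pendantEdges m).not_containsOrderedCopy_prependBlock m.lt_succ_self hred_e,
    not_containsOrderedCopy_pendantEdges_prependBlock hn hblue_e⟩

end LowerBound

/-- For all `m, n ≥ 2`, there is a red/blue coloring of the edges of the complete graph
on `{1,…,R(m,n) + m + n - 2}` with no red ordered copy of `K_m^1` and no blue ordered
copy of `K_n^1`. -/
theorem orderedRamsey_pendant_lowerBound (m n : ℕ) (hm : 2 ≤ m) (hn : 2 ≤ n) :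
    ∃ c : ℕ → ℕ → Bool,
      ¬ ContainsOrderedCopy (m + 1) (classicalRamsey m n + m + n - 2) (pendantEdges m) c
          true ∧
      ¬ ContainsOrderedCopy (n + 1) (classicalRamsey m n + m + n - 2) (pendantEdges n) c
          false := by
  have hm₁ : 1 ≤ m := one_le_two.trans hm
  have hn₁ : 1 ≤ n := one_le_two.trans hn
  obtain ⟨c, hred, hblue⟩ := exists_coloring_not_containsOrderedCopy_completeEdges hm₁ hn₁
  obtain ⟨c', hred', hblue'⟩ :=
    exists_coloring_not_containsOrderedCopy_pendantEdges hm₁ hn₁ hred hblue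
  have hN : classicalRamsey m n + m + n - 2 ≤ classicalRamsey m n - 1 + (n - 1) + m := by omega
  exact ⟨c', fun h ↦ hred' (h.mono hN), fun h ↦ hblue' (h.mono hN)⟩
end

section
/- The ordered Ramsey number of the ordered diamond graph K₄ − e with vertex set {1,2,3,4} and all edges of K₄ except {1,3} equals 14: every 2-coloring of the edges of the complete graph on {1,...,14} contains a monochromatic ordered copy of this graph, and there is a 2-coloring of the edges of the complete graph on {1,...,13} containing no such copy. -/
/-!
Upper bound: some seven of the vertices `1, …, 13` are joined to `14` in a common color `k`. If they
contain an increasing path with two edges of color `k`, then `14` completes it to a diamond.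
Otherwise no vertex both ends and starts such an edge, so the seven vertices split into two classes
without edges of color `k`; one class has four vertices, and these span a complete graph in the
other color.

Lower bound: color `{x, y}` by the quadratic character of `y - x` modulo `13`. In each color every
edge `{y, w}` lies in just two triangles, and their apexes are exchanged by the reflection
`u ↦ y + w - u`. In a monochromatic diamond `x < y < z < w` the vertices `x` and `z` are the apexes
over `{y, w}`, so `13` divides `(y + w) - (x + z) = (y - x) + (w - z)`, which is positive and less
than `w - x ≤ 12`.
-/

theorem exists_subset_lt_card_forall_not_rel {α : Type*} {r : α → α → Prop} {s : Finset α} {m : ℕ}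
    (hpath : ∀ x ∈ s, ∀ y ∈ s, ∀ z ∈ s, r x y → ¬ r y z) (hcard : 2 * m < s.card) :
    ∃ t ⊆ s, m < t.card ∧ ∀ x ∈ t, ∀ y ∈ t, ¬ r x y := by
  classical
  let HasPred (y : α) : Prop := ∃ x ∈ s, r x y
  have hsplit := s.card_filter_add_card_filter_not HasPred
  obtain hlarge | hlarge : m < (s.filter HasPred).card ∨ m < (s.filter (¬ HasPred ·)).card := by
    omega
  · refine ⟨_, s.filter_subset HasPred, hlarge, fun x hx y hy hxy => ?_⟩
    obtain ⟨hxs, u, hus, hux⟩ := Finset.mem_filter.1 hx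
    exact hpath u hus x hxs y (Finset.mem_filter.1 hy).1 hux hxy
  · refine ⟨_, s.filter_subset (¬ HasPred ·), hlarge, fun x hx y hy hxy => ?_⟩
    exact (Finset.mem_filter.1 hy).2 ⟨x, (Finset.mem_filter.1 hx).1, hxy⟩

theorem exists_lt_lt_lt_of_three_lt_card {α : Type*} [LinearOrder α] {s : Finset α}
    (hs : 3 < s.card) : ∃ x ∈ s, ∃ y ∈ s, ∃ z ∈ s, ∃ w ∈ s, x < y ∧ y < z ∧ z < w := by
  let f : Fin 4 ↪o α := s.orderEmbOfCardLe hs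
  have hf (i : Fin 4) : f i ∈ s := s.orderEmbOfCardLe_mem hs i
  exact ⟨f 0, hf 0, f 1, hf 1, f 2, hf 2, f 3, hf 3, f.strictMono (by decide),
    f.strictMono (by decide), f.strictMono (by decide)⟩

/-- The edges of the ordered diamond `K₄ - e` missing `{1, 3}`: the increasing path `1, 2, 3`
together with the vertex `4` joined to all of it. -/
abbrev diamondEdges : Finset (ℕ × ℕ) := {(1, 2), (1, 4), (2, 3), (2, 4), (3, 4)}

theorem containsOrderedCopy_diamondEdges_iff {N : ℕ} {c : ℕ → ℕ → Bool} {b : Bool} :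
    ContainsOrderedCopy 4 N diamondEdges c b ↔
      ∃ x y z w, 1 ≤ x ∧ x < y ∧ y < z ∧ z < w ∧ w ≤ N ∧
        c x y = b ∧ c x w = b ∧ c y z = b ∧ c y w = b ∧ c z w = b := by
  constructor
  · rintro ⟨φ, hrange, hmono, hcolor⟩
    have hedges : c (φ 1) (φ 2) = b ∧ c (φ 1) (φ 4) = b ∧ c (φ 2) (φ 3) = b ∧
        c (φ 2) (φ 4) = b ∧ c (φ 3) (φ 4) = b := by
      simpa [diamondEdges] using hcolor
    exact ⟨φ 1, φ 2, φ 3, φ 4, (hrange 1 le_rfl (by decide)).1, hmono 1 2 (by decide) (by decide)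
      (by decide), hmono 2 3 (by decide) (by decide) (by decide), hmono 3 4 (by decide) (by decide)
      (by decide), (hrange 4 (by decide) le_rfl).2, hedges⟩
  · rintro ⟨x, y, z, w, hx, hxy, hyz, hzw, hw, hcolors⟩
    refine ⟨fun i => if i = 1 then x else if i = 2 then y else if i = 3 then z else w,
      fun i _ _ => ?_, fun i j _ _ _ => ?_, by simpa [diamondEdges] using hcolors⟩
    · dsimp only
      split_ifs <;> omega
    · dsimp only
      split_ifs <;> omega

theorem containsOrderedCopy_diamondEdges_of_clique {N : ℕ} {c : ℕ → ℕ → Bool} {b : Bool}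
    {s : Finset ℕ} (hs : s ⊆ Finset.Icc 1 N) (hcard : 3 < s.card)
    (hclique : ∀ x ∈ s, ∀ y ∈ s, x < y → c x y = b) :
    ContainsOrderedCopy 4 N diamondEdges c b := by
  obtain ⟨x, hx, y, hy, z, hz, w, hw, hxy, hyz, hzw⟩ := exists_lt_lt_lt_of_three_lt_card hcard
  have hyw := hyz.trans hzw
  exact containsOrderedCopy_diamondEdges_iff.2 ⟨x, y, z, w, (Finset.mem_Icc.1 (hs hx)).1, hxy, hyz,
    hzw, (Finset.mem_Icc.1 (hs hw)).2, hclique x hx y hy hxy, hclique x hx w hw (hxy.trans hyw),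
    hclique y hy z hz hyz, hclique y hy w hw hyw, hclique z hz w hw hzw⟩

theorem containsMonoOrderedCopy_diamondEdges_of_neighbors {N w : ℕ} {c : ℕ → ℕ → Bool} {k : Bool}
    {s : Finset ℕ} (hw : w ≤ N) (hs : s ⊆ Finset.Ico 1 w) (hcolor : ∀ v ∈ s, c v w = k)
    (hcard : 6 < s.card) : ContainsMonoOrderedCopy 4 N diamondEdges c := by
  by_cases hpath : ∀ x ∈ s, ∀ y ∈ s, ∀ z ∈ s, x < y ∧ c x y = k → ¬ (y < z ∧ c y z = k)
  · obtain ⟨t, hts, htcard, ht⟩ := exists_subset_lt_card_forall_not_rel (m := 3) hpath hcard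
    have htN : t ⊆ Finset.Icc 1 N := fun v hv => by
      have := Finset.mem_Ico.1 (hs (hts hv))
      exact Finset.mem_Icc.2 ⟨this.1, by omega⟩
    exact ⟨!k, containsOrderedCopy_diamondEdges_of_clique htN htcard fun x hx y hy hxy =>
      Bool.eq_not.2 fun hk => ht x hx y hy ⟨hxy, hk⟩⟩
  · push Not at hpath
    obtain ⟨x, hx, y, hy, z, hz, ⟨hxy, hcxy⟩, hyz, hcyz⟩ := hpath
    exact ⟨k, containsOrderedCopy_diamondEdges_iff.2 ⟨x, y, z, w, (Finset.mem_Ico.1 (hs hx)).1, hxy,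
      hyz, (Finset.mem_Ico.1 (hs hz)).2, hw, hcxy, hcolor x hx, hcyz, hcolor y hy, hcolor z hz⟩⟩

theorem containsMonoOrderedCopy_diamondEdges {N : ℕ} (hN : 14 ≤ N) (c : ℕ → ℕ → Bool) :
    ContainsMonoOrderedCopy 4 N diamondEdges c := by
  obtain ⟨k, -, hk⟩ := Finset.exists_lt_card_fiber_of_mul_lt_card_of_maps_to
    (s := Finset.Ico 1 14) (t := Finset.univ) (f := (c · 14)) (n := 6)
    (fun _ _ => Finset.mem_univ _) (by decide)
  exact containsMonoOrderedCopy_diamondEdges_of_neighbors hN (Finset.filter_subset _ _)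
    (fun v hv => (Finset.mem_filter.1 hv).2) hk

theorem natCast_sub_natCast_ne_zero_of_lt {n x y : ℕ} (hxy : x < y) (hn : y - x < n) :
    (y - x : ZMod n) ≠ 0 := by
  rw [← Nat.cast_sub hxy.le, Ne, ZMod.natCast_eq_zero_iff]
  exact Nat.not_dvd_of_pos_of_lt (by omega) hn

theorem quadraticChar_eq_of_eq_one_iff {F : Type*} [Field F] [Fintype F] [DecidableEq F] {a b : F}
    (ha : a ≠ 0) (hb : b ≠ 0) (h : quadraticChar F a = 1 ↔ quadraticChar F b = 1) :
    quadraticChar F a = quadraticChar F b := by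
  rcases quadraticChar_dichotomy ha with ha | ha <;>
    rcases quadraticChar_dichotomy hb with hb | hb <;> simp_all

theorem quadraticChar_div_eq_one {F : Type*} [Field F] [Fintype F] [DecidableEq F] {a d : F}
    (hd : d ≠ 0) (h : quadraticChar F a = quadraticChar F d) : quadraticChar F (a / d) = 1 := by
  have : quadraticChar F (a / d) * quadraticChar F d = 1 * quadraticChar F d := by
    rw [← map_mul, div_mul_cancel₀ a hd, h, one_mul]
  exact mul_right_cancel₀ (quadraticChar_eq_zero_iff.not.2 hd) this

instance fact_prime_thirteen : Fact (Nat.Prime 13) := ⟨by norm_num⟩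

local notation "χ" => quadraticChar (ZMod 13)

theorem eq_four_or_eq_ten_of_quadraticChar_eq_one :
    ∀ {t : ZMod 13}, χ t = 1 → χ (1 - t) = 1 → t = 4 ∨ t = 10 := by
  decide

theorem add_eq_of_quadraticChar_eq {u v d : ZMod 13} (hd : d ≠ 0) (huv : u ≠ v)
    (hu : χ u = χ d) (hdu : χ (d - u) = χ d) (hv : χ v = χ d) (hdv : χ (d - v) = χ d) :
    u + v = d := by
  have ratio {a : ZMod 13} (ha : χ a = χ d) (hda : χ (d - a) = χ d) :
      a / d = 4 ∨ a / d = 10 := by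
    refine eq_four_or_eq_ten_of_quadraticChar_eq_one (quadraticChar_div_eq_one hd ha) ?_
    rw [← div_self hd, ← sub_div]
    exact quadraticChar_div_eq_one hd hda
  have hne : u / d ≠ v / d := fun h => huv ((div_left_inj' hd).1 h)
  have hsum : u / d + v / d = 1 := by
    rcases ratio hu hdu with h | h <;> rcases ratio hv hdv with h' | h'
    · exact absurd (h.trans h'.symm) hne
    · rw [h, h']
      decide
    · rw [h, h']
      decide
    · exact absurd (h.trans h'.symm) hne
  rwa [← add_div, div_eq_one_iff_eq hd] at hsum

/-- The Paley coloring of order `13`: the color of `{x, y}` says whether `y - x` is a nonzero square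
modulo `13`. This does not depend on the order of `x` and `y`, as `-1` is a square. -/
def paleyColoring (x y : ℕ) : Bool :=
  decide (χ (y - x) = 1)

theorem not_containsMonoOrderedCopy_paleyColoring {N : ℕ} (hN : N ≤ 13) :
    ¬ ContainsMonoOrderedCopy 4 N diamondEdges paleyColoring := by
  rintro ⟨b, hb⟩
  obtain ⟨x, y, z, w, hx, hxy, hyz, hzw, hw, cxy, cxw, cyz, cyw, czw⟩ :=
    containsOrderedCopy_diamondEdges_iff.1 hb
  have hd : (w - y : ZMod 13) ≠ 0 := natCast_sub_natCast_ne_zero_of_lt (by omega) (by omega)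
  have char_eq {i j : ℕ} (hij : i < j) (hj : j - i < 13) (hc : paleyColoring i j = b) :
      χ (j - i) = χ (w - y) :=
    quadraticChar_eq_of_eq_one_iff (natCast_sub_natCast_ne_zero_of_lt hij hj) hd
      (decide_eq_decide.1 (hc.trans cyw.symm))
  have hxz : (x - y : ZMod 13) ≠ z - y := fun h =>
    natCast_sub_natCast_ne_zero_of_lt (n := 13) (hxy.trans hyz) (by omega)
      (sub_eq_zero.2 (sub_left_injective h).symm)
  have hneg : χ (x - y) = χ (y - x) := by
    rw [← neg_sub, ← neg_one_mul, map_mul, show χ (-1) = 1 by decide, one_mul]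
  have hsum : (x - y + (z - y) : ZMod 13) = w - y := by
    refine add_eq_of_quadraticChar_eq hd hxz (hneg.trans (char_eq hxy (by omega) cxy)) ?_
      (char_eq hyz (by omega) cyz) ?_
    · rw [sub_sub_sub_cancel_right]
      exact char_eq (by omega) (by omega) cxw
    · rw [sub_sub_sub_cancel_right]
      exact char_eq hzw (by omega) czw
  have hreflect : (y + w : ℕ) - (x + z : ℕ) = (0 : ZMod 13) := by
    push_cast
    linear_combination -hsum
  exact natCast_sub_natCast_ne_zero_of_lt (by omega) (by omega) hreflect

/-- The ordered Ramsey number of the diamond `K₄ - e` on vertex set `{1,2,3,4}` with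
all edges of `K₄` except `(1, 3)` equals `14`: every 2-coloring of the edges
of the complete graph on `{1,…,14}` contains a monochromatic ordered copy, and
some 2-coloring of the edges of the complete graph on `{1,…,13}` contains
none. -/
theorem orderedRamsey_diamond_missing_13_eq :
    (∀ c : ℕ → ℕ → Bool,
      ContainsMonoOrderedCopy 4 14 {(1, 2), (1, 4), (2, 3), (2, 4), (3, 4)} c) ∧
    (∃ c : ℕ → ℕ → Bool,
      ¬ ContainsMonoOrderedCopy 4 13 {(1, 2), (1, 4), (2, 3), (2, 4), (3, 4)} c) :=
  ⟨containsMonoOrderedCopy_diamondEdges le_rfl,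
    paleyColoring, not_containsMonoOrderedCopy_paleyColoring le_rfl⟩
end
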